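/- arXiv:2008.10101 — 6 statements merged into one kernel-verified Lean document; each statement's English description precedes it below -/
import Mathlib

section
/- Let (J, 𝒜) be a standard Borel space, let v : J × J → ℝ be a bounded nonnegative Borel measurable function, let c ∈ ℝ, and let φ, ψ be finite nonnegative Borel measures on J × J with φ ≤ ψ. There exists a circulation α with φ ≤ α ≤ ψ and ∫ v dα = c if and only if for every potential F the following three inequalities hold: ∫ (F + v)₊ dψ ≥ ∫ (F + v)₋ dφ + c, ∫ (F − v)₊ dψ ≥ ∫ (F − v)₋ dφ − c, and ∫ F₊ dψ ≥ ∫ F₋ dφ, where g₊ and g₋ denote the positive and negative parts of the function g. -/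
open MeasureTheory Set

/-- Integral of a function against a finite signed measure, via the Jordan decomposition. -/
noncomputable def signedIntegral {X : Type*} [MeasurableSpace X]
    (α : SignedMeasure X) (f : X → ℝ) : ℝ :=
  (∫ x, f x ∂α.toJordanDecomposition.posPart) - ∫ x, f x ∂α.toJordanDecomposition.negPart

/-- The sublinear functional `∫ u₊ dψ - ∫ u₋ dφ`. -/
noncomputable def circP {X : Type*} [MeasurableSpace X] (φ ψ : Measure X) (u : X → ℝ) : ℝ :=
  (∫ p, max (u p) 0 ∂ψ) - ∫ p, max (-(u p)) 0 ∂φ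

/-- Bounded measurable functions. -/
def circB (X : Type*) [MeasurableSpace X] : Submodule ℝ (X → ℝ) where
  carrier := {u | Measurable u ∧ ∃ C, ∀ p, |u p| ≤ C}
  zero_mem' := ⟨measurable_const, 0, fun p => by simp⟩
  add_mem' := by
    rintro a b ⟨ha, C, hC⟩ ⟨hb, D, hD⟩
    exact ⟨ha.add hb, C + D, fun p => (abs_add_le _ _).trans (add_le_add (hC p) (hD p))⟩
  smul_mem' := by
    rintro t a ⟨ha, C, hC⟩
    refine ⟨ha.const_smul t, |t| * C, fun p => ?_⟩
    simp only [Pi.smul_apply, smul_eq_mul, abs_mul]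
    exact mul_le_mul_of_nonneg_left (hC p) (abs_nonneg t)

section
variable {X : Type*} [MeasurableSpace X]

theorem circB_integrable {u : X → ℝ} (hu : u ∈ circB X) (μ : Measure X) [IsFiniteMeasure μ] :
    Integrable u μ := by
  obtain ⟨h, C, hC⟩ := hu
  exact Integrable.of_bound h.aestronglyMeasurable C (ae_of_all _ fun p => hC p)

theorem circB_pos {u : X → ℝ} (hu : u ∈ circB X) : (fun p => max (u p) 0) ∈ circB X := by
  obtain ⟨h, C, hC⟩ := hu
  refine ⟨h.max measurable_const, C, fun p => ?_⟩
  have := hC p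
  have h2 := abs_le.1 this
  rw [abs_of_nonneg (le_max_right _ _)]
  exact max_le h2.2 ((abs_nonneg _).trans this)

theorem circB_neg {u : X → ℝ} (hu : u ∈ circB X) : (fun p => max (-(u p)) 0) ∈ circB X :=
  circB_pos ((circB X).neg_mem hu)

theorem circB_ind {S : Set X} (hS : MeasurableSet S) : S.indicator (fun _ => (1:ℝ)) ∈ circB X := by
  refine ⟨measurable_const.indicator hS, 1, fun p => ?_⟩
  by_cases h : p ∈ S <;> simp [h]

theorem circP_add (φ ψ : Measure X) [IsFiniteMeasure φ] [IsFiniteMeasure ψ] (h : φ ≤ ψ)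
    {u w : X → ℝ} (hu : u ∈ circB X) (hw : w ∈ circB X) :
    circP φ ψ (u + w) ≤ circP φ ψ u + circP φ ψ w := by
  have hs := (circB X).add_mem hu hw
  have i1 := fun (μ : Measure X) [IsFiniteMeasure μ] => circB_integrable (circB_pos hu) μ
  have i2 := fun (μ : Measure X) [IsFiniteMeasure μ] => circB_integrable (circB_pos hw) μ
  have i3 := fun (μ : Measure X) [IsFiniteMeasure μ] => circB_integrable (circB_pos hs) μ
  have n1 := circB_integrable (circB_neg hu) φ
  have n2 := circB_integrable (circB_neg hw) φ
  have n3 := circB_integrable (circB_neg hs) φ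
  have key : ∫ p, (max (u p) 0 + max (w p) 0 - max ((u + w) p) 0) ∂φ ≤
      ∫ p, (max (u p) 0 + max (w p) 0 - max ((u + w) p) 0) ∂ψ := by
    refine integral_mono_measure h (ae_of_all _ fun p => ?_) (((i1 ψ).add (i2 ψ)).sub (i3 ψ))
    simp only [Pi.add_apply, Pi.zero_apply]
    grind
  have e : ∫ p, (max (u p) 0 + max (w p) 0 - max ((u + w) p) 0) ∂φ =
      ∫ p, (max (-(u p)) 0 + max (-(w p)) 0 - max (-((u + w) p)) 0) ∂φ := by
    refine integral_congr_ae (ae_of_all _ fun p => ?_)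
    simp only [Pi.add_apply]
    grind
  have k1 := (integral_sub (n1.add n2) n3).trans
    (congrArg (· - ∫ p, max (-((u + w) p)) 0 ∂φ) (integral_add n1 n2))
  have k2 := (integral_sub ((i1 ψ).add (i2 ψ)) (i3 ψ)).trans
    (congrArg (· - ∫ p, max ((u + w) p) 0 ∂ψ) (integral_add (i1 ψ) (i2 ψ)))
  simp only [Pi.add_apply] at k1 k2 key e
  rw [e, k1, k2] at key
  simp only [circP, Pi.add_apply]
  linarith

theorem circP_smul (φ ψ : Measure X) (u : X → ℝ) {t : ℝ} (ht : 0 < t) :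
    circP φ ψ (t • u) = t * circP φ ψ u := by
  unfold circP
  rw [mul_sub, ← integral_const_mul, ← integral_const_mul]
  simp only [mul_max_of_nonneg _ _ ht.le, Pi.smul_apply, smul_eq_mul, mul_zero, mul_neg]

theorem circP_le (φ ψ : Measure X) [IsFiniteMeasure ψ] {u : X → ℝ} (hu : u ∈ circB X) {ε : ℝ}
    (h : ∀ p, |u p| ≤ ε) (hε : 0 ≤ ε) : circP φ ψ u ≤ ε * ψ.real univ := by
  have h1 : 0 ≤ ∫ p, max (-(u p)) 0 ∂φ := integral_nonneg fun p => le_max_right _ _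
  have h2 : ∫ p, max (u p) 0 ∂ψ ≤ ∫ p, ε ∂ψ :=
    integral_mono (circB_integrable (circB_pos hu) ψ) (integrable_const _)
      fun p => max_le ((le_abs_self _).trans (h p)) hε
  rw [integral_const, smul_eq_mul, mul_comm] at h2
  unfold circP
  linarith

theorem circP_ind (φ ψ : Measure X) {S : Set X} (hS : MeasurableSet S) :
    circP φ ψ (S.indicator fun _ => (1:ℝ)) = ψ.real S := by
  have h1 : (fun p => max (S.indicator (fun _ => (1:ℝ)) p) 0) = S.indicator fun _ => (1:ℝ) := by
    ext p; by_cases h : p ∈ S <;> simp [h]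
  have h2 : (fun p => max (-(S.indicator (fun _ => (1:ℝ)) p)) 0) = fun _ => (0:ℝ) := by
    ext p; by_cases h : p ∈ S <;> simp [h]
  unfold circP
  rw [h1, h2, integral_indicator hS]
  simp

theorem circP_neg_ind (φ ψ : Measure X) {S : Set X} (hS : MeasurableSet S) :
    circP φ ψ (-(S.indicator fun _ => (1:ℝ))) = - φ.real S := by
  have h1 : (fun p => max ((-(S.indicator (fun _ => (1:ℝ)))) p) 0) = fun _ => (0:ℝ) := by
    ext p; by_cases h : p ∈ S <;> simp [h]
  have h2 : (fun p => max (-((-(S.indicator (fun _ => (1:ℝ)))) p)) 0)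
      = S.indicator fun _ => (1:ℝ) := by
    ext p; by_cases h : p ∈ S <;> simp [h]
  unfold circP
  rw [h1, h2, integral_indicator hS]
  simp

theorem circ_signedIntegral (μ : Measure X) [IsFiniteMeasure μ] (u : X → ℝ) :
    signedIntegral μ.toSignedMeasure u = ∫ p, u p ∂μ := by
  have : μ.toSignedMeasure.toJordanDecomposition =
      ⟨μ, 0, Measure.MutuallySingular.zero_right⟩ := by
    apply SignedMeasure.toJordanDecomposition_eq
    simp [JordanDecomposition.toSignedMeasure]
  unfold signedIntegral
  rw [this]
  simp

theorem circ_exists_measure (α : SignedMeasure X) (φ : Measure X) [IsFiniteMeasure φ]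
    (h : φ.toSignedMeasure ≤ α) :
    ∃ μ : Measure X, ∃ _ : IsFiniteMeasure μ, μ.toSignedMeasure = α := by
  have h0 : (0 : SignedMeasure X) ≤ α := (Measure.zero_le_toSignedMeasure φ).trans h
  have h1 := (VectorMeasure.le_restrict_univ_iff_le 0 α).2 h0
  exact ⟨_, inferInstance, SignedMeasure.toMeasureOfZeroLE_toSignedMeasure α h1⟩

theorem circ_le_of_signed (φ ψ : Measure X) [IsFiniteMeasure φ] [IsFiniteMeasure ψ]
    (h : φ.toSignedMeasure ≤ ψ.toSignedMeasure) : φ ≤ ψ := by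
  refine Measure.le_iff.2 fun S hS => ?_
  have := h S hS
  rw [Measure.toSignedMeasure_apply_measurable hS, Measure.toSignedMeasure_apply_measurable hS]
    at this
  exact (ENNReal.toReal_le_toReal (measure_ne_top _ _) (measure_ne_top _ _)).1 this

/-- Linear functional dominated by `circP` is integration against a measure. -/
theorem circ_repr (φ ψ : Measure X) [IsFiniteMeasure φ] [IsFiniteMeasure ψ]
    (L : circB X →ₗ[ℝ] ℝ) (hL : ∀ u : circB X, L u ≤ circP φ ψ u) :
    ∃ μ : Measure X, ∃ _ : IsFiniteMeasure μ, φ.toSignedMeasure ≤ μ.toSignedMeasure ∧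
      μ.toSignedMeasure ≤ ψ.toSignedMeasure ∧ ∀ u : circB X, L u = ∫ p, u.1 p ∂μ := by
  classical
  have hup : ∀ S (hS : MeasurableSet S), L ⟨_, circB_ind hS⟩ ≤ ψ.real S := fun S hS => by
    rw [← circP_ind φ ψ hS]; exact hL _
  have hlo : ∀ S (hS : MeasurableSet S), φ.real S ≤ L ⟨_, circB_ind hS⟩ := fun S hS => by
    have := hL (-⟨_, circB_ind hS⟩)
    rw [map_neg, Submodule.coe_neg, circP_neg_ind φ ψ hS] at this
    linarith
  have hun : ∀ S T (hS : MeasurableSet S) (hT : MeasurableSet T), Disjoint S T →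
      L ⟨_, circB_ind (hS.union hT)⟩ = L ⟨_, circB_ind hS⟩ + L ⟨_, circB_ind hT⟩ := by
    intro S T hS hT hd
    rw [← map_add]
    congr 1
    apply Subtype.ext
    exact Set.indicator_union_of_disjoint hd _
  have hfin : ∀ (f : ℕ → Set X) (hf : ∀ i, MeasurableSet (f i)), Pairwise (Function.onFun Disjoint f) →
      ∀ s : Finset ℕ, L ⟨_, circB_ind (s.measurableSet_biUnion fun i _ => hf i)⟩ =
        ∑ i ∈ s, L ⟨_, circB_ind (hf i)⟩ := by
    intro f hf hd s
    rw [← map_sum]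
    congr 1
    apply Subtype.ext
    simp only [AddSubmonoidClass.coe_finsetSum]
    ext p
    rw [Finset.indicator_biUnion_apply s f (fun i _ j _ hij => hd hij), Finset.sum_apply]
  let α : SignedMeasure X :=
    { measureOf' := fun S => if hS : MeasurableSet S then L ⟨_, circB_ind hS⟩ else 0
      empty' := by
        rw [dif_pos MeasurableSet.empty]
        have : (⟨_, circB_ind MeasurableSet.empty⟩ : circB X) = 0 := by
          apply Subtype.ext; simp; rfl
        rw [this, map_zero]
      not_measurable' := fun S hS => dif_neg hS
      m_iUnion' := by
        intro f hf hd
        have hU := MeasurableSet.iUnion hf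
        simp only [hf, hU, dif_pos]
        have hψ := ψ.toSignedMeasure.m_iUnion hf hd
        simp only [Measure.toSignedMeasure_apply_measurable hU,
          Measure.toSignedMeasure_apply_measurable (hf _)] at hψ
        unfold HasSum at hψ ⊢
        simp only [SummationFilter.unconditional_filter] at hψ ⊢
        rw [tendsto_iff_norm_sub_tendsto_zero] at hψ ⊢
        refine squeeze_zero (fun _ => norm_nonneg _) (fun s => ?_) hψ
        have hm := s.measurableSet_biUnion fun i _ => hf i
        have hsub : (⋃ i ∈ s, f i) ⊆ ⋃ i, f i := iUnion₂_subset fun i _ => subset_iUnion f i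
        have e1 := hun _ _ hm (hU.diff hm) disjoint_sdiff_right
        have e2 : ψ.real (⋃ i, f i) = ψ.real (⋃ i ∈ s, f i) + ψ.real ((⋃ i, f i) \ ⋃ i ∈ s, f i) := by
          rw [← measureReal_union disjoint_sdiff_right (hU.diff hm) (measure_ne_top _ _)
            (measure_ne_top _ _), union_sdiff_cancel hsub]
        have e3 : ψ.real (⋃ i ∈ s, f i) = ∑ i ∈ s, ψ.real (f i) :=
          measureReal_biUnion_finset (fun i _ j _ hij => hd hij) (fun i _ => hf i)
        have e4 := hfin f hf hd s
        simp only [union_sdiff_cancel hsub] at e1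
        have u1 := hup _ (hU.diff hm)
        have u2 := (measureReal_nonneg).trans (hlo _ (hU.diff hm))
        rw [Real.norm_eq_abs, Real.norm_eq_abs, abs_sub_comm, abs_sub_comm (∑ i ∈ s, ψ.real (f i))]
        rw [e1, e2, e3, e4, add_sub_cancel_left, add_sub_cancel_left, abs_of_nonneg u2]
        exact u1.trans (le_abs_self _) }
  have hα : ∀ S (hS : MeasurableSet S), α S = L ⟨_, circB_ind hS⟩ := fun S hS => dif_pos hS
  have hφα : φ.toSignedMeasure ≤ α := fun S hS => by
    rw [hα S hS, Measure.toSignedMeasure_apply_measurable hS]; exact hlo S hS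
  obtain ⟨μ, hμ, hμα⟩ := circ_exists_measure α φ hφα
  refine ⟨μ, hμ, hμα ▸ hφα, fun S hS => ?_, ?_⟩
  · rw [hμα, hα S hS, Measure.toSignedMeasure_apply_measurable hS]; exact hup S hS
  have hind : ∀ S (hS : MeasurableSet S), L ⟨_, circB_ind hS⟩ = μ.real S := fun S hS => by
    rw [← hα S hS, ← hμα, Measure.toSignedMeasure_apply_measurable hS]
  have hsB : ∀ s : SimpleFunc X ℝ, (s : X → ℝ) ∈ circB X := fun s => by
    obtain ⟨C, hC⟩ := s.exists_forall_norm_le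
    exact ⟨s.measurable, C, hC⟩
  have hsimple : ∀ s : SimpleFunc X ℝ, L ⟨s, hsB s⟩ = ∫ p, s p ∂μ := by
    intro s
    induction s using SimpleFunc.induction with
    | const t hS =>
      rename_i S
      have : (⟨_, hsB (SimpleFunc.piecewise S hS (SimpleFunc.const _ t) (SimpleFunc.const _ 0))⟩
          : circB X) = t • ⟨_, circB_ind hS⟩ := by
        apply Subtype.ext
        ext p
        by_cases h : p ∈ S <;> simp [h]
      rw [this, map_smul, hind _ hS]
      have h2 : (fun p => (SimpleFunc.piecewise S hS (SimpleFunc.const _ t)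
          (SimpleFunc.const _ 0)) p) = S.indicator fun _ => t := by
        ext p
        by_cases h : p ∈ S <;> simp [h]
      rw [h2, integral_indicator hS]
      simp [mul_comm]
    | add hd hf hg =>
      rename_i f g
      have : (⟨_, hsB (f + g)⟩ : circB X) = ⟨_, hsB f⟩ + ⟨_, hsB g⟩ := rfl
      rw [this, map_add, hf, hg, ← integral_add (circB_integrable (hsB f) μ)
        (circB_integrable (hsB g) μ)]
      rfl
  have hLabs : ∀ (u : circB X) (ε : ℝ), 0 ≤ ε → (∀ p, |u.1 p| ≤ ε) → |L u| ≤ ε * ψ.real univ := by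
    intro u ε hε h
    have h1 := (hL u).trans (circP_le φ ψ u.2 h hε)
    have h2 := (hL (-u)).trans (circP_le φ ψ (-u).2 (fun p => by simpa using h p) hε)
    rw [map_neg] at h2
    exact abs_le.2 ⟨by linarith, h1⟩
  intro u
  obtain ⟨hum, C, hC⟩ := u.2
  have key : ∀ n : ℕ, |L u - ∫ p, u.1 p ∂μ| ≤
      (1 / ((n:ℝ) + 1)) * (ψ.real univ + μ.real univ) := by
    intro n
    have hn : (0:ℝ) < (n:ℝ) + 1 := by positivity
    let s : SimpleFunc X ℝ :=
      { toFun := fun p => (⌊((n:ℝ) + 1) * u.1 p⌋ : ℝ) / ((n:ℝ) + 1)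
        measurableSet_fiber' := fun y => by
          have : Measurable fun p => (⌊((n:ℝ) + 1) * u.1 p⌋ : ℝ) / ((n:ℝ) + 1) := by
            have h1 : Measurable fun p => ⌊((n:ℝ) + 1) * u.1 p⌋ :=
              (hum.const_mul _).floor
            exact (measurable_from_top.comp h1).div_const _
          exact this (measurableSet_singleton y)
        finite_range' := by
          refine ((Set.finite_Icc (⌊-(((n:ℝ) + 1) * C)⌋) (⌊((n:ℝ) + 1) * C⌋)).image
            (fun k : ℤ => (k:ℝ) / ((n:ℝ) + 1))).subset ?_
          rintro _ ⟨p, rfl⟩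
          have := abs_le.1 (hC p)
          refine ⟨_, ⟨Int.floor_le_floor ?_, Int.floor_le_floor ?_⟩, rfl⟩
          · nlinarith
          · nlinarith }
    have hs : ∀ p, |u.1 p - s p| ≤ 1 / ((n:ℝ) + 1) := by
      intro p
      change |u.1 p - (⌊((n:ℝ) + 1) * u.1 p⌋ : ℝ) / ((n:ℝ) + 1)| ≤ _
      have h1 := Int.floor_le (((n:ℝ) + 1) * u.1 p)
      have h2 := (Int.lt_floor_add_one (((n:ℝ) + 1) * u.1 p)).le
      have e : u.1 p - (⌊((n:ℝ) + 1) * u.1 p⌋ : ℝ) / ((n:ℝ) + 1) =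
        (((n:ℝ) + 1) * u.1 p - ⌊((n:ℝ) + 1) * u.1 p⌋) / ((n:ℝ) + 1) := by field_simp
      rw [e, abs_of_nonneg (div_nonneg (by linarith) hn.le)]
      exact div_le_div_of_nonneg_right (by linarith) hn.le
    have a1 := hLabs (u - ⟨s, hsB s⟩) _ (by positivity) hs
    have a2 : |∫ p, (u.1 p - s p) ∂μ| ≤ 1 / ((n:ℝ) + 1) * μ.real univ :=
      norm_integral_le_of_norm_le_const (f := fun p => u.1 p - s p) (ae_of_all _ hs)
    rw [integral_sub (circB_integrable u.2 μ) (circB_integrable (hsB s) μ)] at a2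
    rw [map_sub, hsimple s] at a1
    rw [mul_add]
    have := abs_sub (L u - ∫ p, s p ∂μ) (∫ p, u.1 p ∂μ - ∫ p, s p ∂μ)
    grind
  have lim : Filter.Tendsto (fun n : ℕ => (1 / ((n:ℝ) + 1)) * (ψ.real univ + μ.real univ))
      Filter.atTop (nhds 0) := by
    simpa using tendsto_one_div_add_atTop_nhds_zero_nat.mul_const (ψ.real univ + μ.real univ)
  have := ge_of_tendsto' lim key
  exact sub_eq_zero.1 (abs_eq_zero.1 (le_antisymm this (abs_nonneg _)))

theorem circP_ge (φ ψ μ : Measure X) [IsFiniteMeasure φ] [IsFiniteMeasure ψ] [IsFiniteMeasure μ]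
    (h1 : φ ≤ μ) (h2 : μ ≤ ψ) {u : X → ℝ} (hu : u ∈ circB X) :
    ∫ p, u p ∂μ ≤ circP φ ψ u := by
  have e : ∫ p, u p ∂μ = ∫ p, (max (u p) 0 - max (-(u p)) 0) ∂μ := by
    refine integral_congr_ae (ae_of_all _ fun p => ?_)
    grind
  rw [e, integral_sub (circB_integrable (circB_pos hu) μ) (circB_integrable (circB_neg hu) μ)]
  unfold circP
  have a := integral_mono_measure h2 (ae_of_all _ fun p => le_max_right (u p) 0)
    (circB_integrable (circB_pos hu) ψ)
  have b := integral_mono_measure h1 (ae_of_all _ fun p => le_max_right (-(u p)) 0)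
    (circB_integrable (circB_neg hu) μ)
  linarith
end

section
variable {J : Type*} [MeasurableSpace J]

/-- The potential of `f`. -/
def circPot (f : J → ℝ) : J × J → ℝ := fun p => f p.1 - f p.2

theorem circPot_mem {f : J → ℝ} (hf : f ∈ circB J) : circPot f ∈ circB (J × J) := by
  obtain ⟨h, C, hC⟩ := hf
  exact ⟨(h.comp measurable_fst).sub (h.comp measurable_snd), C + C, fun p =>
    (abs_sub _ _).trans (add_le_add (hC _) (hC _))⟩

/-- The submodule of potentials. -/
def circPots (J : Type*) [MeasurableSpace J] : Submodule ℝ (circB (J × J)) where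
  carrier := {F | ∃ f ∈ circB J, F.1 = circPot f}
  zero_mem' := ⟨0, (circB J).zero_mem, by ext; simp [circPot]⟩
  add_mem' := by
    rintro a b ⟨f, hf, ha⟩ ⟨g, hg, hb⟩
    refine ⟨f + g, (circB J).add_mem hf hg, ?_⟩
    ext p
    simp [ha, hb, circPot]; ring
  smul_mem' := by
    rintro t a ⟨f, hf, ha⟩
    refine ⟨t • f, (circB J).smul_mem t hf, ?_⟩
    ext p
    simp [ha, circPot]; ring

theorem circ_pot_integral (μ : Measure (J × J)) [IsFiniteMeasure μ]
    (h : ∀ A : Set J, MeasurableSet A → μ.toSignedMeasure (A ×ˢ (univ : Set J)) =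
      μ.toSignedMeasure ((univ : Set J) ×ˢ A)) {f : J → ℝ} (hf : f ∈ circB J) :
    ∫ p, circPot f p ∂μ = 0 := by
  have hm : μ.map Prod.fst = μ.map Prod.snd := by
    ext A hA
    rw [Measure.map_apply measurable_fst hA, Measure.map_apply measurable_snd hA]
    have := h A hA
    rw [Measure.toSignedMeasure_apply_measurable (hA.prod MeasurableSet.univ),
      Measure.toSignedMeasure_apply_measurable (MeasurableSet.univ.prod hA),
      prod_univ, univ_prod] at this
    exact (ENNReal.toReal_eq_toReal_iff' (measure_ne_top _ _) (measure_ne_top _ _)).1 this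
  have hfm := hf.1
  have b1 : (fun p : J × J => f p.1) ∈ circB (J × J) :=
    ⟨hfm.comp measurable_fst, hf.2.imp fun C hC p => hC _⟩
  have b2 : (fun p : J × J => f p.2) ∈ circB (J × J) :=
    ⟨hfm.comp measurable_snd, hf.2.imp fun C hC p => hC _⟩
  unfold circPot
  rw [integral_sub (circB_integrable b1 μ) (circB_integrable b2 μ),
    ← integral_map (φ := Prod.fst) measurable_fst.aemeasurable hfm.aestronglyMeasurable,
    ← integral_map (φ := Prod.snd) measurable_snd.aemeasurable hfm.aestronglyMeasurable,
    hm, sub_self]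

theorem circ_hb (v : J × J → ℝ) (hv : v ∈ circB (J × J)) (c : ℝ)
    (φ ψ : Measure (J × J)) [IsFiniteMeasure φ] [IsFiniteMeasure ψ] (hφψ : φ ≤ ψ)
    (H : ∀ f ∈ circB J, c ≤ circP φ ψ (circPot f + v) ∧ -c ≤ circP φ ψ (circPot f - v) ∧
      0 ≤ circP φ ψ (circPot f)) :
    ∃ L : circB (J × J) →ₗ[ℝ] ℝ, (∀ u : circB (J × J), L u ≤ circP φ ψ u) ∧ L ⟨v, hv⟩ = c ∧
      ∀ f (hf : f ∈ circB J), L ⟨_, circPot_mem hf⟩ = 0 := by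
  let N : circB (J × J) × ℝ → ℝ := fun x => circP φ ψ (x.1.1 + x.2 • v) - x.2 * c
  let F : circB (J × J) × ℝ →ₗ.[ℝ] ℝ := ⟨(circPots J).prod ⊤, 0⟩
  obtain ⟨g, hg, hgN⟩ := exists_extension_of_le_sublinear F N
    (by
      rintro t ht ⟨x, s⟩
      simp only [N, Prod.smul_mk, Submodule.coe_smul, smul_eq_mul]
      rw [mul_smul, ← smul_add, circP_smul _ _ _ ht]
      ring)
    (by
      rintro ⟨x, s⟩ ⟨y, t⟩
      simp only [N, Prod.mk_add_mk, Submodule.coe_add]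
      have := circP_add φ ψ hφψ ((circB _).add_mem x.2 ((circB _).smul_mem s hv))
        ((circB _).add_mem y.2 ((circB _).smul_mem t hv))
      have e : x.1 + y.1 + (s + t) • v = x.1 + s • v + (y.1 + t • v) := by
        rw [add_smul]; abel
      rw [e]
      linarith)
    (by
      rintro ⟨⟨x, t⟩, ⟨f, hf, hx⟩, -⟩
      change (0:ℝ) ≤ circP φ ψ (x.1 + t • v) - t * c
      simp only at hx
      rw [hx]
      rcases lt_trichotomy t 0 with ht | rfl | ht
      · have h := (H ((-t)⁻¹ • f) ((circB J).smul_mem _ hf)).2.1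
        have e : circPot f + t • v = (-t) • (circPot ((-t)⁻¹ • f) - v) := by
          have : t ≠ 0 := ht.ne
          ext p
          simp [circPot]
          field_simp
          ring
        rw [e, circP_smul _ _ _ (by linarith)]
        nlinarith
      · simpa using (H f hf).2.2
      · have h := (H (t⁻¹ • f) ((circB J).smul_mem _ hf)).1
        have e : circPot f + t • v = t • (circPot (t⁻¹ • f) + v) := by
          have : t ≠ 0 := ht.ne'
          ext p
          simp [circPot]
          field_simp
        rw [e, circP_smul _ _ _ ht]
        nlinarith)
  have g0 : ∀ x ∈ circPots J, ∀ t : ℝ, g (x, t) = 0 := fun x hx t =>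
    hg ⟨(x, t), ⟨hx, trivial⟩⟩
  have hgt : ∀ x t, g (x, 0) = g (x, t) := by
    intro x t
    have : (x, t) = (x, (0:ℝ)) + (0, t) := by simp
    rw [this, map_add, g0 0 (circPots J).zero_mem, add_zero]
  have p0 : circP φ ψ 0 = 0 := by simp [circP]
  refine ⟨g.comp (LinearMap.inl ℝ _ _), fun u => ?_, ?_, ?_⟩
  · have := hgN (u, 0)
    simpa [N] using this
  · have h1 := hgN (⟨v, hv⟩, -1)
    have h2 := hgN (-⟨v, hv⟩, 1)
    rw [← hgt] at h1 h2
    have e : ((-⟨v, hv⟩ : circB (J × J)), (0:ℝ)) = -(⟨v, hv⟩, 0) := by simp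
    rw [e, map_neg] at h2
    simp [N, p0] at h1 h2
    simp only [LinearMap.comp_apply, LinearMap.inl_apply]
    linarith
  · intro f hf
    exact g0 _ ⟨f, hf, rfl⟩ 0
end

/-- **Optimal circulations.** Given a bounded nonnegative measurable `v`, a real `c`, and finite
nonnegative measures `φ ≤ ψ` on `J × J`, there is a circulation `α` with `φ ≤ α ≤ ψ` and
`∫ v dα = c` iff the three inequalities hold for every potential `F(x,y) = f(x) - f(y)`. -/
theorem stmt_1 {J : Type*} [MeasurableSpace J] [StandardBorelSpace J]
    (v : J × J → ℝ) (hv_meas : Measurable v) (hv_bdd : ∃ C, ∀ p, |v p| ≤ C)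
    (hv_nonneg : ∀ p, 0 ≤ v p) (c : ℝ)
    (φ ψ : Measure (J × J)) [IsFiniteMeasure φ] [IsFiniteMeasure ψ]
    (hφψ : φ ≤ ψ) :
    (∃ α : SignedMeasure (J × J),
        (∀ A : Set J, MeasurableSet A → α (A ×ˢ (univ : Set J)) = α ((univ : Set J) ×ˢ A)) ∧
        φ.toSignedMeasure ≤ α ∧ α ≤ ψ.toSignedMeasure ∧
        signedIntegral α v = c) ↔
      (∀ f : J → ℝ, Measurable f → (∃ C, ∀ x, |f x| ≤ C) →
        ((∫ p, max ((f p.1 - f p.2) + v p) 0 ∂ψ) ≥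
            (∫ p, max (-((f p.1 - f p.2) + v p)) 0 ∂φ) + c) ∧
        ((∫ p, max ((f p.1 - f p.2) - v p) 0 ∂ψ) ≥
            (∫ p, max (-((f p.1 - f p.2) - v p)) 0 ∂φ) - c) ∧
        ((∫ p, max (f p.1 - f p.2) 0 ∂ψ) ≥ ∫ p, max (-(f p.1 - f p.2)) 0 ∂φ)) := by
  have hv : v ∈ circB (J × J) := ⟨hv_meas, hv_bdd⟩
  constructor
  · rintro ⟨α, hα, h1, h2, hc⟩ f hf hfb
    obtain ⟨μ, hμ, rfl⟩ := circ_exists_measure α φ h1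
    have h1' := circ_le_of_signed _ _ h1
    have h2' := circ_le_of_signed _ _ h2
    rw [circ_signedIntegral] at hc
    have hfB : f ∈ circB J := ⟨hf, hfb⟩
    have hF := circPot_mem hfB
    have h0 := circ_pot_integral μ hα hfB
    have iF := circB_integrable hF μ
    have iv := circB_integrable hv μ
    have a := circP_ge φ ψ μ h1' h2' ((circB _).add_mem hF hv)
    have b := circP_ge φ ψ μ h1' h2' ((circB _).sub_mem hF hv)
    have d := circP_ge φ ψ μ h1' h2' hF
    rw [integral_add' iF iv, h0, hc] at a
    rw [integral_sub' iF iv, h0, hc] at b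
    rw [h0] at d
    simp only [circP, circPot, Pi.add_apply, Pi.sub_apply] at a b d
    refine ⟨?_, ?_, ?_⟩ <;> linarith
  · intro H
    obtain ⟨L, hL, hLv, hLf⟩ := circ_hb v hv c φ ψ hφψ (fun f hf => by
      obtain ⟨a, b, d⟩ := H f hf.1 hf.2
      simp only [circP, circPot, Pi.add_apply, Pi.sub_apply]
      refine ⟨?_, ?_, ?_⟩ <;> linarith)
    obtain ⟨μ, hμ, h1, h2, hμL⟩ := circ_repr φ ψ L hL
    refine ⟨μ.toSignedMeasure, fun A hA => ?_, h1, h2, ?_⟩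
    · have e1 := hLf _ (circB_ind hA)
      have m1 : MeasurableSet (A ×ˢ (univ : Set J)) := hA.prod MeasurableSet.univ
      have m2 : MeasurableSet ((univ : Set J) ×ˢ A) := MeasurableSet.univ.prod hA
      rw [hμL] at e1
      have e2 : circPot (A.indicator fun _ => (1:ℝ)) =
          fun p => (A ×ˢ (univ : Set J)).indicator (fun _ => (1:ℝ)) p -
            ((univ : Set J) ×ˢ A).indicator (fun _ => (1:ℝ)) p := by
        ext ⟨x, y⟩
        by_cases hx : x ∈ A <;> by_cases hy : y ∈ A <;> simp [circPot, hx, hy]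
      simp only [e2] at e1
      rw [integral_sub (circB_integrable (circB_ind m1) μ) (circB_integrable (circB_ind m2) μ),
        integral_indicator m1, integral_indicator m2] at e1
      rw [Measure.toSignedMeasure_apply_measurable m1, Measure.toSignedMeasure_apply_measurable m2]
      simp only [integral_const, smul_eq_mul, mul_one, measureReal_restrict_apply_univ] at e1
      linarith
    · rw [circ_signedIntegral, ← hLv, hμL]
end

section
/- Let (J, 𝒜) be a standard Borel space, let v : J × J → ℝ be a bounded nonnegative Borel measurable function taking only integer values, let c ∈ ℝ, and let φ, ψ be finite nonnegative Borel measures on J × J with φ ≤ ψ. There exists a circulation α with φ ≤ α ≤ ψ and ∫ v dα = c if and only if for every integer-valued potential F (i.e. F(x,y) = f(x) − f(y) where f : J → ℤ is bounded and Borel measurable) the following hold: ∫ (F + v)₊ dψ ≥ ∫ (F + v)₋ dφ + c, ∫ (F − v)₊ dψ ≥ ∫ (F − v)₋ dφ − c, and ∫ F₊ dψ ≥ ∫ F₋ dφ, where g₊ and g₋ denote the positive and negative parts of the function g. -/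
open MeasureTheory Set

lemma aux_fract_periodic : Function.Periodic (Int.fract : ℝ → ℝ) 1 := fun x => Int.fract_add_one x

lemma aux_fract_integrable (a b : ℝ) : IntervalIntegrable (Int.fract : ℝ → ℝ) volume a b := by
  rw [intervalIntegrable_iff]
  refine Measure.integrableOn_of_bounded (M := 1) ?_ measurable_fract.aestronglyMeasurable ?_
  · simp [uIoc]
  · refine ae_of_all _ fun x => ?_
    rw [Real.norm_eq_abs, abs_of_nonneg (Int.fract_nonneg x)]
    exact (Int.fract_lt_one x).le

lemma aux_integral_fract (a : ℝ) : ∫ t in (0:ℝ)..1, Int.fract (a + t) = 1 / 2 := by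
  rw [intervalIntegral.integral_comp_add_left (fun t => Int.fract t) a]
  rw [add_zero, aux_fract_periodic.intervalIntegral_add_eq a 0, zero_add]
  have : ∫ t in (0:ℝ)..1, Int.fract t = ∫ t in (0:ℝ)..1, t := by
    apply intervalIntegral.integral_congr_ae
    have : ∀ᵐ t : ℝ ∂volume, t ≠ 1 := by simp [ae_iff]
    filter_upwards [this] with t ht hm
    rw [uIoc_of_le zero_le_one] at hm
    rw [Int.fract_eq_self]
    exact ⟨hm.1.le, lt_of_le_of_ne hm.2 ht⟩
  rw [this, integral_id]; norm_num

lemma aux_floor_integrable (a : ℝ) :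
    IntervalIntegrable (fun t : ℝ => (⌊a + t⌋ : ℝ)) volume 0 1 := by
  have h1 : (fun t : ℝ => (⌊a + t⌋ : ℝ)) = fun t => (a + t) - Int.fract (a + t) := by
    ext t; rw [Int.self_sub_fract]
  rw [h1]
  refine IntervalIntegrable.sub (Continuous.intervalIntegrable (by fun_prop) _ _) ?_
  have := (aux_fract_integrable (a) (a + 1)).comp_add_left (c := a)
  simpa using this

lemma aux_integral_floor (a : ℝ) : ∫ t in (0:ℝ)..1, (⌊a + t⌋ : ℝ) = a := by
  have h1 : (fun t : ℝ => (⌊a + t⌋ : ℝ)) = fun t => (a + t) - Int.fract (a + t) := by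
    ext t; rw [Int.self_sub_fract]
  rw [h1, intervalIntegral.integral_sub, aux_integral_fract]
  · rw [intervalIntegral.integral_add (by simp) (by simp)]
    simp
  · exact Continuous.intervalIntegrable (by fun_prop) _ _
  · have := (aux_fract_integrable (a) (a + 1)).comp_add_left (c := a)
    simpa using this

lemma aux_integral_max (a b : ℝ) (n : ℤ) :
    ∫ t in (0:ℝ)..1, max ((⌊a + t⌋ : ℝ) - ⌊b + t⌋ + n) 0 = max (a - b + n) 0 := by
  rcases le_total 0 (a - b + n) with h | h
  · rw [max_eq_left h]
    have : ∀ t : ℝ, max ((⌊a + t⌋ : ℝ) - ⌊b + t⌋ + n) 0 = (⌊a + t⌋ : ℝ) - ⌊b + t⌋ + n := by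
      intro t
      apply max_eq_left
      have : ⌊b + t⌋ ≤ ⌊a + t + n⌋ := Int.floor_le_floor (by linarith)
      rw [Int.floor_add_intCast] at this
      have : (⌊b + t⌋ : ℝ) ≤ ⌊a + t⌋ + n := by exact_mod_cast this
      linarith
    simp_rw [this]
    rw [intervalIntegral.integral_add ((aux_floor_integrable a).sub (aux_floor_integrable b)) (by simp),
      intervalIntegral.integral_sub (aux_floor_integrable a) (aux_floor_integrable b),
      aux_integral_floor, aux_integral_floor]
    simp
  · rw [max_eq_right h]
    have : ∀ t : ℝ, max ((⌊a + t⌋ : ℝ) - ⌊b + t⌋ + n) 0 = 0 := by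
      intro t
      apply max_eq_right
      have : ⌊a + t + n⌋ ≤ ⌊b + t⌋ := Int.floor_le_floor (by linarith)
      rw [Int.floor_add_intCast] at this
      have : (⌊a + t⌋ : ℝ) + n ≤ ⌊b + t⌋ := by exact_mod_cast this
      linarith
    simp [this]

lemma aux_floor_bound {a t C : ℝ} (ha : |a| ≤ C) (ht : t ∈ Ioc (0:ℝ) 1) :
    |(⌊a + t⌋ : ℝ)| ≤ C + 2 := by
  have h1 := Int.floor_le (a + t)
  have h2 := Int.lt_floor_add_one (a + t)
  rw [abs_le] at ha ⊢
  constructor <;> linarith [ht.1, ht.2]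

lemma aux_prod_integrable {X : Type*} [MeasurableSpace X] (μ : Measure X) [IsFiniteMeasure μ]
    (a b w : X → ℝ) (ha : Measurable a) (hb : Measurable b) (hw : Measurable w)
    (C : ℝ) (hC : ∀ x, |a x| ≤ C) (hC' : ∀ x, |b x| ≤ C) (hCw : ∀ x, |w x| ≤ C) :
    Integrable (Function.uncurry fun (t : ℝ) (x : X) =>
      max ((⌊a x + t⌋ : ℝ) - ⌊b x + t⌋ + w x) 0) ((volume.restrict (Ioc (0:ℝ) 1)).prod μ) := by
  have hm : Measurable (Function.uncurry fun (t : ℝ) (x : X) =>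
      max ((⌊a x + t⌋ : ℝ) - ⌊b x + t⌋ + w x) 0) := by
    unfold Function.uncurry
    have hz : Measurable (fun z : ℤ => (z : ℝ)) := measurable_from_top
    have h1 : Measurable fun p : ℝ × X => (⌊a p.2 + p.1⌋ : ℝ) :=
      hz.comp (((ha.comp measurable_snd).add measurable_fst).floor)
    have h2 : Measurable fun p : ℝ × X => (⌊b p.2 + p.1⌋ : ℝ) :=
      hz.comp (((hb.comp measurable_snd).add measurable_fst).floor)
    exact ((h1.sub h2).add (hw.comp measurable_snd)).max measurable_const
  refine Integrable.of_bound hm.aestronglyMeasurable (3 * C + 4) ?_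
  have : ∀ᵐ p : ℝ × X ∂((volume.restrict (Ioc (0:ℝ) 1)).prod μ), p.1 ∈ Ioc (0:ℝ) 1 :=
    Measure.quasiMeasurePreserving_fst.ae (ae_restrict_mem measurableSet_Ioc)
  filter_upwards [this] with p hp
  have h1 := abs_le.1 (aux_floor_bound (hC p.2) hp)
  have h2 := abs_le.1 (aux_floor_bound (hC' p.2) hp)
  have h3 := abs_le.1 (hCw p.2)
  simp only [Function.uncurry, Real.norm_eq_abs]
  rw [abs_of_nonneg (le_max_right _ _)]
  apply max_le <;> linarith [h1.1, h1.2]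

lemma aux_fubini {X : Type*} [MeasurableSpace X] (μ : Measure X) [IsFiniteMeasure μ]
    (a b w : X → ℝ) (ha : Measurable a) (hb : Measurable b) (hw : Measurable w)
    (C : ℝ) (hC : ∀ x, |a x| ≤ C) (hC' : ∀ x, |b x| ≤ C) (hCw : ∀ x, |w x| ≤ C)
    (hi : ∀ x, ∃ n : ℤ, w x = n) :
    Integrable (fun t : ℝ => ∫ x, max ((⌊a x + t⌋ : ℝ) - ⌊b x + t⌋ + w x) 0 ∂μ)
      (volume.restrict (Ioc (0:ℝ) 1)) ∧
    ∫ t in Ioc (0:ℝ) 1, ∫ x, max ((⌊a x + t⌋ : ℝ) - ⌊b x + t⌋ + w x) 0 ∂μ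
      = ∫ x, max (a x - b x + w x) 0 ∂μ := by
  have hI := aux_prod_integrable μ a b w ha hb hw C hC hC' hCw
  refine ⟨hI.integral_prod_left, ?_⟩
  rw [integral_integral_swap hI]
  congr 1
  ext x
  obtain ⟨n, hn⟩ := hi x
  rw [← intervalIntegral.integral_of_le zero_le_one, hn, aux_integral_max]

/-- Passing from integer potentials to real potentials. -/
lemma aux_real_of_int {J : Type*} [MeasurableSpace J] (φ ψ : Measure (J × J))
    [IsFiniteMeasure φ] [IsFiniteMeasure ψ] (w : J × J → ℝ) (hw : Measurable w)
    (C : ℝ) (hCw : ∀ x, |w x| ≤ C) (hi : ∀ x, ∃ n : ℤ, w x = n) (c : ℝ)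
    (H : ∀ f : J → ℤ, Measurable f → (∃ C : ℤ, ∀ x, |f x| ≤ C) →
      (∫ p, max (-(((f p.1 : ℝ) - (f p.2 : ℝ)) + w p)) 0 ∂φ) + c ≤
        ∫ p, max (((f p.1 : ℝ) - (f p.2 : ℝ)) + w p) 0 ∂ψ)
    (f : J → ℝ) (hf : Measurable f) (D : ℝ) (hD : ∀ x, |f x| ≤ D) :
    (∫ p, max (-((f p.1 - f p.2) + w p)) 0 ∂φ) + c ≤ ∫ p, max ((f p.1 - f p.2) + w p) 0 ∂ψ := by
  have h1 := aux_fubini ψ (fun p => f p.1) (fun p => f p.2) w (hf.comp measurable_fst)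
    (hf.comp measurable_snd) hw (max C D) (fun x => (hD _).trans (le_max_right _ _))
    (fun x => (hD _).trans (le_max_right _ _)) (fun x => (hCw _).trans (le_max_left _ _)) hi
  have h2 := aux_fubini φ (fun p => f p.2) (fun p => f p.1) (fun p => - w p)
    (hf.comp measurable_snd) (hf.comp measurable_fst)
    hw.neg (max C D) (fun x => (hD _).trans (le_max_right _ _))
    (fun x => (hD _).trans (le_max_right _ _))
    (fun x => by rw [abs_neg]; exact (hCw _).trans (le_max_left _ _))
    (fun x => by obtain ⟨n, hn⟩ := hi x; exact ⟨-n, by rw [hn]; simp⟩)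
  have e : ∀ x y z : ℝ, -(x - y + z) = y - x + -z := fun x y z => by ring
  simp_rw [e] at H ⊢
  rw [← h1.2, ← h2.2]
  have hc : c = ∫ t in Ioc (0:ℝ) 1, c := by simp
  rw [hc, ← integral_add h2.1 (by simp)]
  refine setIntegral_mono_on (h2.1.add (by simp)) h1.1 measurableSet_Ioc fun t ht => ?_
  refine H (fun x => ⌊f x + t⌋) ((hf.add_const t).floor) ⟨⌈D + 2⌉, fun x => ?_⟩
  have := (aux_floor_bound (hD x) ht).trans (Int.le_ceil _)
  exact_mod_cast this

lemma aux_duality {X : Type*} [MeasurableSpace X] (φ ρ : Measure X)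
    [IsFiniteMeasure φ] [IsFiniteMeasure ρ] (S : Submodule ℝ ((X → ℝ) × ℝ))
    (hmeas : ∀ q ∈ S, Measurable q.1) (hbdd : ∀ q ∈ S, ∃ C, ∀ x, |q.1 x| ≤ C)
    (hle : ∀ q ∈ S, q.2 ≤ (∫ x, q.1 x ∂φ) + ∫ x, max (q.1 x) 0 ∂ρ) :
    ∃ m : Measure X, φ ≤ m ∧ m ≤ φ + ρ ∧ ∀ q ∈ S, ∫ x, q.1 x ∂m = q.2 := by
  set ψ := φ + ρ with hψ
  have hφψ : φ ≤ ψ := Measure.le_add_right le_rfl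
  have hρψ : ρ ≤ ψ := Measure.le_add_left le_rfl
  have acφ : ∀ {P : X → Prop}, (∀ᵐ x ∂ψ, P x) → ∀ᵐ x ∂φ, P x := fun h => ae_mono hφψ h
  have acρ : ∀ {P : X → Prop}, (∀ᵐ x ∂ψ, P x) → ∀ᵐ x ∂ρ, P x := fun h => ae_mono hρψ h
  let E := Lp ℝ 2 ψ
  have hIntψ : ∀ g : E, Integrable g ψ := fun g => (Lp.memLp g).integrable (by norm_num)
  have hIntψφ : ∀ g : E, Integrable g φ := fun g => (hIntψ g).mono_measure hφψ
  have hIntψρ : ∀ g : E, Integrable g ρ := fun g => (hIntψ g).mono_measure hρψ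
  have hmaxρ : ∀ g : E, Integrable (fun x => max (g x) 0) ρ := fun g => (hIntψρ g).pos_part
  let N : E → ℝ := fun g => (∫ x, g x ∂φ) + ∫ x, max (g x) 0 ∂ρ
  have hN : ∀ (g : E) (G : X → ℝ), g =ᵐ[ψ] G → N g = (∫ x, G x ∂φ) + ∫ x, max (G x) 0 ∂ρ := by
    intro g G h
    have e1 : ∫ x, g x ∂φ = ∫ x, G x ∂φ := integral_congr_ae (acφ h)
    have e2 : ∫ x, max (g x) 0 ∂ρ = ∫ x, max (G x) 0 ∂ρ :=
      integral_congr_ae ((acρ h).mono fun x hx => by simp only [hx])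
    simp only [N, e1, e2]
  have hN0 : N 0 = 0 := by
    rw [hN 0 (fun _ => 0) (Lp.coeFn_zero _ _ _)]; simp
  have N_hom : ∀ c : ℝ, 0 < c → ∀ x, N (c • x) = c * N x := by
    intro c hc g
    rw [hN _ _ (Lp.coeFn_smul c g)]
    have : ∀ x, max ((c • (g : X → ℝ)) x) 0 = c * max (g x) 0 := by
      intro x
      rw [mul_max_of_nonneg _ _ hc.le]; simp
    simp_rw [this]
    simp only [N, Pi.smul_apply, smul_eq_mul, integral_const_mul]
    ring
  have N_add : ∀ x y, N (x + y) ≤ N x + N y := by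
    intro g k
    rw [hN _ _ (Lp.coeFn_add g k)]
    have e1 : ∫ x, (g + k : X → ℝ) x ∂φ = (∫ x, g x ∂φ) + ∫ x, k x ∂φ :=
      integral_add (hIntψφ g) (hIntψφ k)
    have e2 : ∫ x, max ((g + k : X → ℝ) x) 0 ∂ρ
        ≤ (∫ x, max (g x) 0 ∂ρ) + ∫ x, max (k x) 0 ∂ρ := by
      rw [← integral_add (hmaxρ g) (hmaxρ k)]
      refine integral_mono ((hIntψρ g).add (hIntψρ k)).pos_part ((hmaxρ g).add (hmaxρ k)) fun x => ?_
      simp only [Pi.add_apply]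
      apply max_le
      · linarith [le_max_left (g x) 0, le_max_left (k x) 0]
      · linarith [le_max_right (g x) 0, le_max_right (k x) 0]
    rw [e1]; simp only [N]; linarith
  let Γ : Submodule ℝ (E × ℝ) :=
    { carrier := {q | ∃ G : X → ℝ, (G, q.2) ∈ S ∧ q.1 =ᵐ[ψ] G}
      zero_mem' := ⟨0, S.zero_mem, Lp.coeFn_zero _ _ _⟩
      add_mem' := by
        rintro ⟨g, r⟩ ⟨k, s⟩ ⟨G, hG, hg⟩ ⟨K, hK, hk⟩
        exact ⟨G + K, S.add_mem hG hK, (Lp.coeFn_add g k).trans (hg.add hk)⟩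
      smul_mem' := by
        rintro c ⟨g, r⟩ ⟨G, hG, hg⟩
        exact ⟨c • G, S.smul_mem c hG, (Lp.coeFn_smul c g).trans (hg.const_smul c)⟩ }
  have hΓle : ∀ q ∈ Γ, q.2 ≤ N q.1 := by
    rintro ⟨g, r⟩ ⟨G, hG, hg⟩
    rw [hN g G hg]
    exact hle _ hG
  have hΓ0 : ∀ (q : E × ℝ) (_ : q ∈ Γ) (_ : q.1 = 0), q.2 = 0 := by
    intro q hq h0
    have h1 := hΓle q hq
    have h2 := hΓle (-q) (Γ.neg_mem hq)
    simp only [Prod.fst_neg, Prod.snd_neg, h0, neg_zero, hN0] at h1 h2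
    linarith
  obtain ⟨ℓ, hℓ1, hℓ2⟩ := exists_extension_of_le_sublinear Γ.toLinearPMap N N_hom N_add
    (fun x => hΓle _ (Submodule.mem_graph_toLinearPMap hΓ0 x))
  have hℓS : ∀ q ∈ Γ, ℓ q.1 = q.2 := by
    rintro ⟨g, r⟩ hq
    have hq' := hq
    rw [← Submodule.toLinearPMap_graph_eq Γ hΓ0, LinearPMap.mem_graph_iff] at hq'
    obtain ⟨y, h1, h2⟩ := hq'
    simp only at h1 h2 ⊢
    rw [← h1, hℓ1 y, h2]
  have hNb : ∀ g : E, N g ≤ ∫ x, |g x| ∂ψ := by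
    intro g
    refine le_of_le_of_eq ?_ (integral_add_measure (hIntψφ g).abs (hIntψρ g).abs).symm
    apply add_le_add
    · exact integral_mono (hIntψφ g) (hIntψφ g).abs fun x => le_abs_self _
    · exact integral_mono (hmaxρ g) (hIntψρ g).abs fun x => max_le (le_abs_self _) (abs_nonneg _)
  let one : E := (memLp_const (1:ℝ)).toLp _
  have hone : one =ᵐ[ψ] fun _ => (1:ℝ) := MemLp.coeFn_toLp _
  have hL1 : ∀ g : E, ∫ x, |g x| ∂ψ ≤ ‖one‖ * ‖g‖ := by
    intro g
    have h := real_inner_le_norm one |g|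
    rw [norm_abs_eq_norm, L2.inner_def] at h
    refine le_trans (le_of_eq ?_) h
    apply integral_congr_ae
    filter_upwards [hone, Lp.coeFn_abs g] with x h1 h2
    simp [h1, h2]
  have hcont : ∀ g : E, ‖ℓ g‖ ≤ ‖one‖ * ‖g‖ := by
    intro g
    rw [Real.norm_eq_abs, abs_le']
    refine ⟨(hℓ2 g).trans ((hNb g).trans (hL1 g)), ?_⟩
    rw [← map_neg]
    have := (hℓ2 (-g)).trans ((hNb (-g)).trans (hL1 (-g)))
    rwa [norm_neg] at this
  let L : E →L[ℝ] ℝ := ℓ.mkContinuous ‖one‖ hcont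
  let h : E := (InnerProductSpace.toDual ℝ E).symm L
  have hh : ∀ g : E, ∫ x, h x * g x ∂ψ = ℓ g := by
    intro g
    have : inner ℝ h g = L g := InnerProductSpace.toDual_symm_apply
    rw [L2.inner_def] at this
    rw [show ℓ g = L g from rfl, ← this]
    apply integral_congr_ae
    refine ae_of_all _ fun x => ?_
    simp [mul_comm]
  have hset : ∀ s, MeasurableSet s → φ.real s ≤ ∫ x in s, h x ∂ψ ∧ ∫ x in s, h x ∂ψ ≤ ψ.real s := by
    intro s hs
    let g : E := indicatorConstLp 2 hs (measure_ne_top ψ s) (1:ℝ)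
    have hg : g =ᵐ[ψ] s.indicator fun _ => (1:ℝ) := indicatorConstLp_coeFn
    have e : ∫ x in s, h x ∂ψ = ℓ g := by
      rw [← hh g, ← integral_indicator hs]
      apply integral_congr_ae
      filter_upwards [hg] with x hx
      rw [hx]; by_cases hxs : x ∈ s <;> simp [hxs]
    rw [e]
    constructor
    · have h1 := hℓ2 (-g)
      rw [map_neg, hN (-g) (fun x => - s.indicator (fun _ => (1:ℝ)) x)
        ((Lp.coeFn_neg g).trans hg.neg)] at h1
      have : ∀ x, max (- s.indicator (fun _ => (1:ℝ)) x) 0 = 0 := fun x =>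
        max_eq_right (by by_cases hxs : x ∈ s <;> simp [hxs])
      simp only [this, integral_neg, integral_zero, integral_indicator hs] at h1
      simp at h1
      linarith
    · have h1 := hℓ2 g
      rw [hN g _ hg] at h1
      have : ∀ x, max (s.indicator (fun _ => (1:ℝ)) x) 0 = s.indicator (fun _ => (1:ℝ)) x := fun x =>
        max_eq_left (by by_cases hxs : x ∈ s <;> simp [hxs])
      simp only [this, integral_indicator hs] at h1
      simp at h1
      exact h1.trans (le_of_eq (measureReal_add_apply (μ₁ := φ) (μ₂ := ρ) (s := s)).symm)
  have hpos : 0 ≤ᵐ[ψ] h := ae_nonneg_of_forall_setIntegral_nonneg (hIntψ h)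
    fun s hs _ => measureReal_nonneg.trans (hset s hs).1
  let m := ψ.withDensity fun x => ENNReal.ofReal (h x)
  have hm : ∀ s, MeasurableSet s → m s = ENNReal.ofReal (∫ x in s, h x ∂ψ) := by
    intro s hs
    rw [withDensity_apply _ hs, ofReal_integral_eq_lintegral_ofReal (hIntψ h).integrableOn
      (ae_restrict_of_ae hpos)]
  refine ⟨m, ?_, ?_, ?_⟩
  · refine Measure.le_iff.2 fun s hs => ?_
    rw [hm s hs, ← ofReal_measureReal (μ := φ)]
    exact ENNReal.ofReal_le_ofReal (hset s hs).1
  · refine Measure.le_iff.2 fun s hs => ?_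
    rw [hm s hs, ← ofReal_measureReal (μ := ψ)]
    exact ENNReal.ofReal_le_ofReal (hset s hs).2
  · rintro ⟨G, r⟩ hq
    obtain ⟨C, hC⟩ := hbdd _ hq
    have hGm : MemLp G 2 ψ := MemLp.of_bound (hmeas _ hq).aestronglyMeasurable C
      (ae_of_all _ hC)
    have := hℓS (hGm.toLp G, r) ⟨G, hq, hGm.coeFn_toLp⟩
    simp only at this ⊢
    rw [← this, ← hh, integral_withDensity_eq_integral_toReal_smul₀
      (hIntψ h).aemeasurable.ennreal_ofReal (by simp)]
    apply integral_congr_ae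
    filter_upwards [hpos, hGm.coeFn_toLp] with x h1 h2
    rw [h2, ENNReal.toReal_ofReal h1, smul_eq_mul]

lemma aux_signedIntegral {X : Type*} [MeasurableSpace X] (m : Measure X) [IsFiniteMeasure m] :
    m.toSignedMeasure.toJordanDecomposition =
      ⟨m, 0, Measure.MutuallySingular.zero_right⟩ := by
  apply SignedMeasure.toJordanDecomposition_eq
  simp [JordanDecomposition.toSignedMeasure]

lemma aux_scale {J : Type*} [MeasurableSpace J] (φ ψ : Measure (J × J))
    [IsFiniteMeasure φ] [IsFiniteMeasure ψ] (w : J × J → ℝ) (hw : Measurable w)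
    (C : ℝ) (hCw : ∀ x, |w x| ≤ C) (hi : ∀ x, ∃ n : ℤ, w x = n) (c : ℝ)
    (H : ∀ f : J → ℤ, Measurable f → (∃ C : ℤ, ∀ x, |f x| ≤ C) →
      (∫ p, max (-(((f p.1 : ℝ) - (f p.2 : ℝ)) + w p)) 0 ∂φ) + c ≤
        ∫ p, max (((f p.1 : ℝ) - (f p.2 : ℝ)) + w p) 0 ∂ψ)
    (f : J → ℝ) (hf : Measurable f) (D : ℝ) (hD : ∀ x, |f x| ≤ D) (l : ℝ) (hl : 0 < l) :
    (∫ p, max (-((f p.1 - f p.2) + l * w p)) 0 ∂φ) + l * c ≤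
      ∫ p, max ((f p.1 - f p.2) + l * w p) 0 ∂ψ := by
  have h := aux_real_of_int φ ψ w hw C hCw hi c H (fun x => f x / l) (hf.div_const l) (D / l)
    (fun x => by rw [abs_div, abs_of_pos hl]; exact div_le_div_of_nonneg_right (hD x) hl.le)
  have h' := mul_le_mul_of_nonneg_left h hl.le
  rw [mul_add, ← integral_const_mul, ← integral_const_mul] at h'
  simp_rw [mul_max_of_nonneg _ _ hl.le, mul_zero] at h'
  have e : ∀ p : J × J, l * (f p.1 / l - f p.2 / l + w p) = f p.1 - f p.2 + l * w p := by
    intro p; field_simp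
  simp_rw [mul_neg, e] at h'
  exact h'

lemma aux_bdd_integrable {X : Type*} [MeasurableSpace X] (μ : Measure X) [IsFiniteMeasure μ]
    (G : X → ℝ) (hG : Measurable G) (C : ℝ) (hC : ∀ x, |G x| ≤ C) : Integrable G μ :=
  Integrable.of_bound hG.aestronglyMeasurable C (ae_of_all _ hC)

lemma aux_conv {X : Type*} [MeasurableSpace X] (μ : Measure X) (G : X → ℝ)
    (hG : Integrable G μ) :
    ∫ x, G x ∂μ = (∫ x, max (G x) 0 ∂μ) - ∫ x, max (-G x) 0 ∂μ := by
  rw [← integral_sub hG.pos_part hG.neg_part]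
  congr 1; ext x
  rcases le_total 0 (G x) with h | h
  · rw [max_eq_left h, max_eq_right (by linarith)]; ring
  · rw [max_eq_right h, max_eq_left (by linarith)]; ring

lemma aux_easy {X : Type*} [MeasurableSpace X] (φ m ψ : Measure X) [IsFiniteMeasure ψ]
    (h1 : φ ≤ m) (h2 : m ≤ ψ) (G : X → ℝ) (hG : Measurable G) (C : ℝ) (hC : ∀ x, |G x| ≤ C)
    (c : ℝ) (hc : ∫ x, G x ∂m = c) :
    (∫ x, max (-G x) 0 ∂φ) + c ≤ ∫ x, max (G x) 0 ∂ψ := by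
  have hI := aux_bdd_integrable ψ G hG C hC
  have hIm := hI.mono_measure h2
  rw [aux_conv m G hIm] at hc
  have a1 : ∫ x, max (G x) 0 ∂m ≤ ∫ x, max (G x) 0 ∂ψ :=
    integral_mono_measure h2 (ae_of_all _ fun x => le_max_right _ _) hI.pos_part
  have a2 : ∫ x, max (-G x) 0 ∂φ ≤ ∫ x, max (-G x) 0 ∂m :=
    integral_mono_measure h1 (ae_of_all _ fun x => le_max_right _ _) hIm.neg_part
  linarith

lemma aux_signed {X : Type*} [MeasurableSpace X] (m : Measure X) [IsFiniteMeasure m]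
    (v : X → ℝ) : signedIntegral m.toSignedMeasure v = ∫ x, v x ∂m := by
  rw [signedIntegral, aux_signedIntegral]; simp

lemma aux_pot {J : Type*} [MeasurableSpace J] (m : Measure (J × J)) [IsFiniteMeasure m]
    (h : ∀ A : Set J, MeasurableSet A → m (A ×ˢ (univ : Set J)) = m ((univ : Set J) ×ˢ A))
    (f : J → ℝ) (hf : Measurable f) : ∫ p, f p.1 ∂m = ∫ p, f p.2 ∂m := by
  have e : m.map Prod.fst = m.map Prod.snd := by
    ext A hA
    rw [Measure.map_apply measurable_fst hA, Measure.map_apply measurable_snd hA]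
    simpa [prod_univ, univ_prod] using h A hA
  rw [← integral_map measurable_fst.aemeasurable hf.aestronglyMeasurable,
    ← integral_map measurable_snd.aemeasurable hf.aestronglyMeasurable, e]

lemma aux_forward {J : Type*} [MeasurableSpace J]
    (v : J × J → ℝ) (hv : Measurable v) (C : ℝ) (hC : ∀ p, |v p| ≤ C) (c : ℝ)
    (φ m ψ : Measure (J × J)) [IsFiniteMeasure ψ] [IsFiniteMeasure m]
    (h1 : φ ≤ m) (h2 : m ≤ ψ)
    (h : ∀ A : Set J, MeasurableSet A → m (A ×ˢ (univ : Set J)) = m ((univ : Set J) ×ˢ A))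
    (hc : ∫ p, v p ∂m = c)
    (f : J → ℝ) (hf : Measurable f) (D : ℝ) (hD : ∀ x, |f x| ≤ D) :
    (∫ p, max (-((f p.1 - f p.2) + v p)) 0 ∂φ) + c ≤ ∫ p, max ((f p.1 - f p.2) + v p) 0 ∂ψ := by
  have i1 : Integrable (fun p : J × J => f p.1) m :=
    aux_bdd_integrable m _ (hf.comp measurable_fst) D fun _ => hD _
  have i2 : Integrable (fun p : J × J => f p.2) m :=
    aux_bdd_integrable m _ (hf.comp measurable_snd) D fun _ => hD _
  have i3 := aux_bdd_integrable m v hv C hC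
  refine aux_easy φ m ψ h1 h2 (fun p => (f p.1 - f p.2) + v p)
    (((hf.comp measurable_fst).sub (hf.comp measurable_snd)).add hv) (D + D + C) (fun p => ?_) c ?_
  · have a1 := abs_le.1 (hD p.1)
    have a2 := abs_le.1 (hD p.2)
    have a3 := abs_le.1 (hC p)
    rw [abs_le]; constructor <;> linarith [a1.1, a1.2, a2.1, a2.2, a3.1, a3.2]
  · have i4 : Integrable (fun p : J × J => f p.1 - f p.2) m := i1.sub i2
    rw [integral_add i4 i3, integral_sub i1 i2, aux_pot m h f hf, hc]; ring

/-- **Integrality supplement to the optimal circulation theorem.** If `v` is integer-valued,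
then it suffices to require the three inequalities for integer-valued potentials
`F(x,y) = f(x) - f(y)` with `f : J → ℤ` bounded measurable. -/
theorem stmt_3 {J : Type*} [MeasurableSpace J] [StandardBorelSpace J]
    (v : J × J → ℝ) (hv_meas : Measurable v) (hv_bdd : ∃ C, ∀ p, |v p| ≤ C)
    (hv_nonneg : ∀ p, 0 ≤ v p) (hv_int : ∀ p, ∃ n : ℤ, v p = n) (c : ℝ)
    (φ ψ : Measure (J × J)) [IsFiniteMeasure φ] [IsFiniteMeasure ψ]
    (hφψ : φ ≤ ψ) :
    (∃ α : SignedMeasure (J × J),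
        (∀ A : Set J, MeasurableSet A → α (A ×ˢ (univ : Set J)) = α ((univ : Set J) ×ˢ A)) ∧
        φ.toSignedMeasure ≤ α ∧ α ≤ ψ.toSignedMeasure ∧
        signedIntegral α v = c) ↔
      (∀ f : J → ℤ, Measurable f → (∃ C : ℤ, ∀ x, |f x| ≤ C) →
        ((∫ p, max (((f p.1 : ℝ) - (f p.2 : ℝ)) + v p) 0 ∂ψ) ≥
            (∫ p, max (-(((f p.1 : ℝ) - (f p.2 : ℝ)) + v p)) 0 ∂φ) + c) ∧
        ((∫ p, max (((f p.1 : ℝ) - (f p.2 : ℝ)) - v p) 0 ∂ψ) ≥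
            (∫ p, max (-(((f p.1 : ℝ) - (f p.2 : ℝ)) - v p)) 0 ∂φ) - c) ∧
        ((∫ p, max ((f p.1 : ℝ) - (f p.2 : ℝ)) 0 ∂ψ) ≥
            ∫ p, max (-((f p.1 : ℝ) - (f p.2 : ℝ))) 0 ∂φ)) := by
  obtain ⟨C, hC⟩ := hv_bdd
  constructor
  · rintro ⟨α, hcirc, hφ, hψ, hc⟩
    have h0 : 0 ≤[univ] α := by
      rw [VectorMeasure.restrict_le_restrict_iff _ _ MeasurableSet.univ]
      intro s hs _
      refine le_trans ?_ (VectorMeasure.le_iff.1 hφ s hs)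
      rw [Measure.toSignedMeasure_apply_measurable hs]
      simp
    obtain ⟨m, hm, rfl⟩ : ∃ (m : Measure (J × J)) (_ : IsFiniteMeasure m),
        m.toSignedMeasure = α :=
      ⟨α.toMeasureOfZeroLE univ MeasurableSet.univ h0, inferInstance,
        SignedMeasure.toMeasureOfZeroLE_toSignedMeasure α h0⟩
    rw [aux_signed] at hc
    have h1 : φ ≤ m := (Measure.toSignedMeasure_le_toSignedMeasure_iff _ _).1 hφ
    have h2 : m ≤ ψ := (Measure.toSignedMeasure_le_toSignedMeasure_iff _ _).1 hψ
    have hcirc' : ∀ A : Set J, MeasurableSet A →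
        m (A ×ˢ (univ : Set J)) = m ((univ : Set J) ×ˢ A) := by
      intro A hA
      have := hcirc A hA
      rw [Measure.toSignedMeasure_apply_measurable (hA.prod MeasurableSet.univ),
        Measure.toSignedMeasure_apply_measurable (MeasurableSet.univ.prod hA)] at this
      exact (measureReal_eq_measureReal_iff).1 this
    intro f hf ⟨D, hD⟩
    have hz : Measurable (fun z : ℤ => (z : ℝ)) := measurable_from_top
    have hf' : Measurable fun x => (f x : ℝ) := hz.comp hf
    have hD' : ∀ x, |(f x : ℝ)| ≤ (D : ℝ) := fun x => by exact_mod_cast hD x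
    refine ⟨?_, ?_, ?_⟩
    · exact aux_forward v hv_meas C hC c φ m ψ h1 h2 hcirc' hc _ hf' D hD'
    · have := aux_forward (fun p => - v p) hv_meas.neg C (fun p => by rw [abs_neg]; exact hC p) (-c)
        φ m ψ h1 h2 hcirc' (by rw [integral_neg, hc]) _ hf' D hD'
      simpa only [← sub_eq_add_neg] using this
    · have := aux_forward (fun p => 0) measurable_const 0 (by simp) 0
        φ m ψ h1 h2 hcirc' (by simp) _ hf' D hD'
      simpa only [add_zero] using this
  · intro H
    have key : ∀ (f : J → ℝ), Measurable f → ∀ (D : ℝ), (∀ x, |f x| ≤ D) → ∀ l : ℝ,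
        (∫ p, max (-((f p.1 - f p.2) + l * v p)) 0 ∂φ) + l * c ≤
          ∫ p, max ((f p.1 - f p.2) + l * v p) 0 ∂ψ := by
      intro f hf D hD l
      rcases lt_trichotomy l 0 with hl | hl | hl
      · have := aux_scale φ ψ (fun p => - v p) hv_meas.neg C
          (fun p => by rw [abs_neg]; exact hC p)
          (fun p => by obtain ⟨n, hn⟩ := hv_int p; exact ⟨-n, by rw [hn]; simp⟩) (-c)
          (fun g hg hb => by
            have := (H g hg hb).2.1
            simpa only [← sub_eq_add_neg] using this) f hf D hD (-l) (by linarith)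
        simpa only [neg_mul_neg] using this
      · have := aux_scale φ ψ (fun p => 0) measurable_const 0 (by simp)
          (fun p => ⟨0, by simp⟩) 0
          (fun g hg hb => by
            have := (H g hg hb).2.2
            simpa only [add_zero] using this) f hf D hD 1 one_pos
        subst hl
        simpa only [mul_zero, zero_mul, add_zero] using this
      · exact aux_scale φ ψ v hv_meas C hC hv_int c (fun g hg hb => (H g hg hb).1) f hf D hD l hl
    let S : Submodule ℝ ((J × J → ℝ) × ℝ) :=
      { carrier := {q | ∃ f : J → ℝ, Measurable f ∧ (∃ D : ℝ, ∀ x, |f x| ≤ D) ∧ ∃ l : ℝ,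
          (q.1 = fun p => (f p.1 - f p.2) + l * v p) ∧ q.2 = l * c}
        zero_mem' := ⟨fun _ => 0, measurable_const, ⟨0, by simp⟩, 0, by ext; simp, by simp⟩
        add_mem' := by
          rintro ⟨g, r⟩ ⟨k, s⟩ ⟨f, hf, ⟨D, hD⟩, l, h1, h2⟩ ⟨f', hf', ⟨D', hD'⟩, l', h1', h2'⟩
          simp only at h1 h2 h1' h2'
          refine ⟨fun x => f x + f' x, hf.add hf', ⟨D + D', fun x =>
            (abs_add_le _ _).trans (add_le_add (hD x) (hD' x))⟩, l + l', ?_, ?_⟩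
          · ext p; simp only [Prod.mk_add_mk, h1, h1', Pi.add_apply]; ring
          · simp only [Prod.mk_add_mk, h2, h2']; ring
        smul_mem' := by
          rintro a ⟨g, r⟩ ⟨f, hf, ⟨D, hD⟩, l, h1, h2⟩
          simp only at h1 h2
          refine ⟨fun x => a * f x, hf.const_mul a, ⟨|a| * D, fun x => by
            rw [abs_mul]; exact mul_le_mul_of_nonneg_left (hD x) (abs_nonneg a)⟩, a * l, ?_, ?_⟩
          · ext p; simp only [Prod.smul_mk, h1, Pi.smul_apply, smul_eq_mul]; ring
          · simp only [Prod.smul_mk, h2, smul_eq_mul]; ring }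
    have hSm : ∀ q ∈ S, Measurable q.1 := by
      rintro ⟨g, r⟩ ⟨f, hf, ⟨D, hD⟩, l, h1, h2⟩
      simp only at h1 ⊢
      rw [h1]
      exact ((hf.comp measurable_fst).sub (hf.comp measurable_snd)).add (hv_meas.const_mul l)
    have hSb : ∀ q ∈ S, ∃ C, ∀ x, |q.1 x| ≤ C := by
      rintro ⟨g, r⟩ ⟨f, hf, ⟨D, hD⟩, l, h1, h2⟩
      simp only at h1 ⊢
      rw [h1]
      refine ⟨D + D + |l| * C, fun p => ?_⟩
      refine (abs_add_le _ _).trans (add_le_add ((abs_sub _ _).trans (add_le_add (hD _) (hD _))) ?_)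
      rw [abs_mul]
      exact mul_le_mul_of_nonneg_left (hC p) (abs_nonneg l)
    have hsum : φ + (ψ - φ) = ψ := by rw [add_comm]; exact Measure.sub_add_cancel_of_le hφψ
    have hfin : IsFiniteMeasure (ψ - φ) := isFiniteMeasure_of_le ψ Measure.sub_le
    obtain ⟨m, hm1, hm2, hm3⟩ := aux_duality φ (ψ - φ) S hSm hSb (by
      intro q hq
      obtain ⟨B, hB⟩ := hSb q hq
      have hI := aux_bdd_integrable ψ q.1 (hSm q hq) B hB
      have hI1 := hI.mono_measure hφψ
      have hI2 : Integrable q.1 (ψ - φ) := hI.mono_measure Measure.sub_le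
      have e1 := aux_conv φ q.1 hI1
      have e2 : ∫ x, max (q.1 x) 0 ∂ψ
          = (∫ x, max (q.1 x) 0 ∂φ) + ∫ x, max (q.1 x) 0 ∂(ψ - φ) := by
        rw [← integral_add_measure hI1.pos_part hI2.pos_part, hsum]
      obtain ⟨f, hf, ⟨D, hD⟩, l, h1, h2⟩ := hq
      have := key f hf D hD l
      rw [← h2] at this
      have e3 : ∀ p, f p.1 - f p.2 + l * v p = q.1 p := fun p => by rw [h1]
      simp_rw [e3] at this
      linarith)
    rw [hsum] at hm2
    have hmfin : IsFiniteMeasure m := isFiniteMeasure_of_le ψ hm2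
    refine ⟨m.toSignedMeasure, ?_, (Measure.toSignedMeasure_le_toSignedMeasure_iff _ _).2 hm1,
      (Measure.toSignedMeasure_le_toSignedMeasure_iff _ _).2 hm2, ?_⟩
    · intro A hA
      have h1 := hm3 (fun p => (A.indicator (fun _ => (1:ℝ)) p.1 - A.indicator (fun _ => (1:ℝ)) p.2)
        + 0 * v p, 0 * c) ⟨A.indicator (fun _ => (1:ℝ)), measurable_const.indicator hA,
          ⟨1, fun x => by by_cases hx : x ∈ A <;> simp [hx]⟩, 0, rfl, rfl⟩
      have hA1 : MeasurableSet (A ×ˢ (univ : Set J)) := hA.prod MeasurableSet.univ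
      have hA2 : MeasurableSet ((univ : Set J) ×ˢ A) := MeasurableSet.univ.prod hA
      rw [Measure.toSignedMeasure_apply_measurable hA1,
        Measure.toSignedMeasure_apply_measurable hA2]
      have e1 : (fun p : J × J => A.indicator (fun _ => (1:ℝ)) p.1)
          = (A ×ˢ (univ : Set J)).indicator fun _ => (1:ℝ) := by
        ext p; by_cases hx : p.1 ∈ A <;> simp [indicator, hx]
      have e2 : (fun p : J × J => A.indicator (fun _ => (1:ℝ)) p.2)
          = ((univ : Set J) ×ˢ A).indicator fun _ => (1:ℝ) := by
        ext p; by_cases hx : p.2 ∈ A <;> simp [indicator, hx]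
      simp only [zero_mul, add_zero] at h1
      have i1 : Integrable (fun p : J × J => A.indicator (fun _ => (1:ℝ)) p.1) m := by
        rw [e1]; exact (integrable_const _).indicator hA1
      have i2 : Integrable (fun p : J × J => A.indicator (fun _ => (1:ℝ)) p.2) m := by
        rw [e2]; exact (integrable_const _).indicator hA2
      rw [integral_sub i1 i2, e1, e2, integral_indicator hA1, integral_indicator hA2] at h1
      simp at h1
      simpa using sub_eq_zero.1 h1
    · rw [aux_signed]
      have := hm3 (fun p => ((0:ℝ) - 0) + 1 * v p, 1 * c)
        ⟨fun _ => 0, measurable_const, ⟨0, by simp⟩, 1, rfl, rfl⟩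
      simpa using this
end

section
/- Let (J, 𝒜) be a standard Borel space, let α, β be finite nonnegative Borel measures on J with α(J) = β(J), and let ψ be a finite nonnegative Borel measure on J × J. There exists a finite nonnegative Borel measure μ on J × J with marginals μ¹ = α and μ² = β and with μ ≤ ψ if and only if ψ(S × T) ≥ α(S) + β(T) − α(J) for all Borel sets S, T ⊆ J. -/
open MeasureTheory Set

/-- Slicing: integrating the lengths of sections equals integrating the measures of sections. -/
lemma slice_fubini {X : Type*} [MeasurableSpace X] (ν : Measure X) [IsFiniteMeasure ν]
    (E : Set (X × ℝ)) (hE : MeasurableSet E) (M : ℝ) :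
    ∫ x, (volume.restrict (Ioc (-M) M)).real {t | (x, t) ∈ E} ∂ν
      = ∫ t in Ioc (-M) M, ν.real {x | (x, t) ∈ E} := by
  have h := integral_integral_swap (μ := ν) (ν := volume.restrict (Ioc (-M) M))
    (f := fun x t => E.indicator (fun _ => (1:ℝ)) (x, t))
    ((integrable_const (1:ℝ)).indicator hE)
  have h1 : ∀ x, ∫ t in Ioc (-M) M, E.indicator (fun _ => (1:ℝ)) (x, t)
      = (volume.restrict (Ioc (-M) M)).real {t | (x, t) ∈ E} := fun x => by
    have := integral_indicator_one (μ := volume.restrict (Ioc (-M) M))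
      (s := {t | (x, t) ∈ E}) (measurable_prodMk_left hE)
    rw [← this]; rfl
  have h2 : ∀ t, ∫ x, E.indicator (fun _ => (1:ℝ)) (x, t) ∂ν
      = ν.real {x | (x, t) ∈ E} := fun t => by
    have := integral_indicator_one (μ := ν)
      (s := {x | (x, t) ∈ E}) (measurable_prodMk_right hE)
    rw [← this]; rfl
  simp only [h1, h2] at h
  exact h

lemma slice_integrable {X : Type*} [MeasurableSpace X] (ν : Measure X) [IsFiniteMeasure ν]
    (E : Set (X × ℝ)) (hE : MeasurableSet E) (M : ℝ) :
    Integrable (fun t => ν.real {x | (x, t) ∈ E}) (volume.restrict (Ioc (-M) M)) := by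
  refine Integrable.of_bound (C := ν.real univ) ?_ ?_
  · exact (measurable_measure_prodMk_right hE).ennreal_toReal.aestronglyMeasurable
  · exact .of_forall fun t => by
      rw [Real.norm_of_nonneg measureReal_nonneg]
      exact measureReal_mono (subset_univ _)

lemma dual_ineq {J : Type*} [MeasurableSpace J] 
    (α β : Measure J) [IsFiniteMeasure α] [IsFiniteMeasure β]
    (hαβ : α univ = β univ)
    (ψ : Measure (J × J)) [IsFiniteMeasure ψ]
    (h : ∀ S T : Set J, MeasurableSet S → MeasurableSet T →
        (α S).toReal + (β T).toReal - (α univ).toReal ≤ (ψ (S ×ˢ T)).toReal)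
    (u v : J → ℝ) (hu : Measurable u) (hv : Measurable v) (M : ℝ)
    (huM : ∀ x, |u x| ≤ M) (hvM : ∀ x, |v x| ≤ M) (hM : 0 ≤ M) :
    ∫ x, u x ∂α + ∫ x, v x ∂β ≤ ∫ z, max (u z.1 + v z.2) 0 ∂ψ := by
  have hE1 : MeasurableSet {p : J × ℝ | p.2 < u p.1} :=
    measurableSet_lt measurable_snd (hu.comp measurable_fst)
  have hE2 : MeasurableSet {p : J × ℝ | -p.2 < v p.1} :=
    measurableSet_lt measurable_snd.neg (hv.comp measurable_fst)
  have hE3 : MeasurableSet {p : (J × J) × ℝ | p.2 < u p.1.1 ∧ -p.2 < v p.1.2} :=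
    (measurableSet_lt measurable_snd (hu.comp (measurable_fst.comp measurable_fst))).inter
    (measurableSet_lt measurable_snd.neg (hv.comp (measurable_snd.comp measurable_fst)))
  have f1 := slice_fubini α _ hE1 M
  have f2 := slice_fubini β _ hE2 M
  have f3 := slice_fubini ψ _ hE3 M
  have i1 := slice_integrable α _ hE1 M
  have i2 := slice_integrable β _ hE2 M
  have i3 := slice_integrable ψ _ hE3 M
  have s1 : ∀ x, (volume.restrict (Ioc (-M) M)).real {t | t < u x} = u x + M := fun x => by
    have := abs_le.1 (huM x)
    have e : {t | t < u x} ∩ Ioc (-M) M = Ioo (-M) (u x) := by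
      ext t; simp only [mem_inter_iff, mem_ofPred_eq, mem_Ioc, mem_Ioo]; grind
    have m : MeasurableSet {t | t < u x} := measurableSet_lt measurable_id measurable_const
    rw [measureReal_restrict_apply m, e,
      Real.volume_real_Ioo_of_le (by linarith)]; ring
  have s2 : ∀ x, (volume.restrict (Ioc (-M) M)).real {t | -t < v x} = v x + M := fun x => by
    have := abs_le.1 (hvM x)
    have e : {t | -t < v x} ∩ Ioc (-M) M = Ioc (-v x) M := by
      ext t; simp only [mem_inter_iff, mem_ofPred_eq, mem_Ioc]; grind
    have m : MeasurableSet {t | -t < v x} := measurableSet_lt measurable_id.neg measurable_const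
    rw [measureReal_restrict_apply m, e,
      Real.volume_real_Ioc_of_le (by linarith)]; ring
  have s3 : ∀ z : J × J, (volume.restrict (Ioc (-M) M)).real {t | t < u z.1 ∧ -t < v z.2}
      = max (u z.1 + v z.2) 0 := fun z => by
    have := abs_le.1 (huM z.1)
    have := abs_le.1 (hvM z.2)
    have e : {t | t < u z.1 ∧ -t < v z.2} ∩ Ioc (-M) M = Ioo (-v z.2) (u z.1) := by
      ext t; simp only [mem_inter_iff, mem_ofPred_eq, mem_Ioc, mem_Ioo]; grind
    have m : MeasurableSet {t | t < u z.1 ∧ -t < v z.2} :=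
      (measurableSet_lt measurable_id measurable_const).inter
      (measurableSet_lt measurable_id.neg measurable_const)
    rw [measureReal_restrict_apply m, e, Real.volume_real_Ioo]
    congr 1; ring
  simp only [mem_ofPred_eq, s1, s2, s3] at f1 f2 f3 i1 i2 i3
  have iu : Integrable u α := .of_bound hu.aestronglyMeasurable M (.of_forall huM)
  have iv : Integrable v β := .of_bound hv.aestronglyMeasurable M (.of_forall hvM)
  rw [integral_add iu (integrable_const _), integral_const] at f1
  rw [integral_add iv (integrable_const _), integral_const] at f2
  have hm : β.real univ = α.real univ := by simp [Measure.real, hαβ]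
  rw [hm] at f2
  have key : ∫ t in Ioc (-M) M, (α.real {x | t < u x} + β.real {x | -t < v x} - α.real univ)
      ≤ ∫ t in Ioc (-M) M, ψ.real {z | t < u z.1 ∧ -t < v z.2} := by
    refine integral_mono ((i1.add i2).sub (integrable_const _)) i3 fun t => ?_
    exact h _ _ (measurableSet_lt measurable_const hu) (measurableSet_lt measurable_const hv)
  have i12 : Integrable (fun t => α.real {x | t < u x} + β.real {x | -t < v x})
    (volume.restrict (Ioc (-M) M)) := i1.add i2
  rw [integral_sub i12 (integrable_const _), integral_add i1 i2, integral_const] at key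
  have hv : (volume.restrict (Ioc (-M) M)).real univ = 2 * M := by
    rw [measureReal_restrict_apply MeasurableSet.univ, univ_inter,
      Real.volume_real_Ioc_of_le (by linarith)]; ring
  rw [hv] at key
  simp only [smul_eq_mul] at *
  linarith

/-- The plan functional. -/
lemma exists_functional {J : Type*} [MeasurableSpace J] 
    (α β : Measure J) [IsFiniteMeasure α] [IsFiniteMeasure β]
    (hαβ : α univ = β univ)
    (ψ : Measure (J × J)) [IsFiniteMeasure ψ]
    (h : ∀ S T : Set J, MeasurableSet S → MeasurableSet T →
        (α S).toReal + (β T).toReal - (α univ).toReal ≤ (ψ (S ×ˢ T)).toReal) :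
    ∃ Λ : SimpleFunc (J × J) ℝ →ₗ[ℝ] ℝ,
      (∀ f : SimpleFunc (J × J) ℝ, Λ f ≤ ∫ z, max (f z) 0 ∂ψ) ∧
      (∀ u : SimpleFunc J ℝ, Λ (u.comp Prod.fst measurable_fst) = ∫ x, u x ∂α) ∧
      (∀ u : SimpleFunc J ℝ, Λ (u.comp Prod.snd measurable_snd) = ∫ x, u x ∂β) := by
  let L : (SimpleFunc J ℝ × SimpleFunc J ℝ) →ₗ[ℝ] SimpleFunc (J × J) ℝ :=
    { toFun := fun w => w.1.comp Prod.fst measurable_fst + w.2.comp Prod.snd measurable_snd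
      map_add' := fun a b => by ext z; simp; ring
      map_smul' := fun c a => by ext z; simp [mul_add] }
  let g : (SimpleFunc J ℝ × SimpleFunc J ℝ) →ₗ[ℝ] ℝ :=
    { toFun := fun w => ∫ x, w.1 x ∂α + ∫ x, w.2 x ∂β
      map_add' := fun a b => by
        simp only [Prod.fst_add, Prod.snd_add, SimpleFunc.coe_add, Pi.add_apply]
        rw [integral_add (a.1.integrable_of_isFiniteMeasure) (b.1.integrable_of_isFiniteMeasure),
          integral_add (a.2.integrable_of_isFiniteMeasure) (b.2.integrable_of_isFiniteMeasure)]
        ring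
      map_smul' := fun c a => by
        simp only [Prod.smul_fst, Prod.smul_snd, SimpleFunc.coe_smul, Pi.smul_apply,
          integral_smul, smul_add, RingHom.id_apply] }
  let p : SimpleFunc (J × J) ℝ → ℝ := fun f => ∫ z, max (f z) 0 ∂ψ
  have ip : ∀ f : SimpleFunc (J × J) ℝ, Integrable (fun z => max (f z) 0) ψ := fun f =>
    (f.integrable_of_isFiniteMeasure).pos_part
  have hgp : ∀ w, g w ≤ p (L w) := by
    intro w
    obtain ⟨A, hA⟩ := w.1.exists_forall_norm_le
    obtain ⟨B, hB⟩ := w.2.exists_forall_norm_le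
    refine dual_ineq α β hαβ ψ h w.1 w.2 w.1.measurable w.2.measurable (max (max A B) 0)
      (fun x => (hA x).trans ?_) (fun x => (hB x).trans ?_) (le_max_right _ _) <;> simp
  have hker : g ∈ (LinearMap.ker L).dualAnnihilator := by
    rw [Submodule.mem_dualAnnihilator]
    intro w hw
    have hw : L w = 0 := hw
    have h1 := hgp w
    have h2 := hgp (-w)
    simp only [map_neg, hw, neg_zero] at h1 h2
    have : p 0 = 0 := by simp [p]
    linarith
  rw [← LinearMap.range_dualMap_eq_dualAnnihilator_ker] at hker
  obtain ⟨f, hf⟩ := hker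
  have hf' : ∀ w, f (L w) = g w := fun w => by rw [← hf]; rfl
  obtain ⟨Λ, hΛ1, hΛ2⟩ := exists_extension_of_le_sublinear
    ⟨LinearMap.range L, f.domRestrict (LinearMap.range L)⟩ p
    (fun c hc x => by
      simp only [p]
      rw [← integral_const_mul]
      congr 1; ext z
      simp [mul_max_of_nonneg _ _ hc.le])
    (fun x y => by
      simp only [p]
      rw [← integral_add (ip x) (ip y)]
      refine integral_mono (ip _) ((ip x).add (ip y)) fun z => ?_
      simp only [SimpleFunc.coe_add, Pi.add_apply]
      grind)
    (fun x => by
      obtain ⟨x, w, rfl⟩ := x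
      exact (hf' w).trans_le (hgp w))
  have hΛL : ∀ w, Λ (L w) = g w := fun w => by
    rw [← hf']; exact hΛ1 ⟨L w, w, rfl⟩
  refine ⟨Λ, hΛ2, fun u => ?_, fun u => ?_⟩
  · have := hΛL (u, 0)
    have e : L (u, 0) = u.comp Prod.fst measurable_fst := by ext z; simp [L]
    rw [e] at this; rw [this]; simp [g]
  · have := hΛL (0, u)
    have e : L (0, u) = u.comp Prod.snd measurable_snd := by ext z; simp [L]
    rw [e] at this; rw [this]; simp [g]

/-- Indicator as a simple function. -/
noncomputable def sInd {X : Type*} [MeasurableSpace X] (A : Set X) (hA : MeasurableSet A) :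
    SimpleFunc X ℝ := SimpleFunc.piecewise A hA (SimpleFunc.const X 1) (SimpleFunc.const X 0)

lemma sInd_apply {X : Type*} [MeasurableSpace X] (A : Set X) (hA : MeasurableSet A) (x : X) :
    sInd A hA x = A.indicator 1 x := by
  classical
  simp [sInd, SimpleFunc.piecewise_apply, indicator]

lemma integral_sInd {X : Type*} [MeasurableSpace X] (ν : Measure X) (A : Set X)
    (hA : MeasurableSet A) : ∫ x, sInd A hA x ∂ν = ν.real A := by
  simp only [sInd_apply]; exact integral_indicator_one hA

/-- A finitely additive functional dominated by a finite measure is a measure. -/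
lemma exists_measure {X : Type*} [MeasurableSpace X] (ψ : Measure X) [IsFiniteMeasure ψ]
    (Λ : SimpleFunc X ℝ →ₗ[ℝ] ℝ) (hΛ : ∀ f : SimpleFunc X ℝ, Λ f ≤ ∫ z, max (f z) 0 ∂ψ) :
    ∃ μ : Measure X, μ ≤ ψ ∧ ∀ A (hA : MeasurableSet A), μ A = ENNReal.ofReal (Λ (sInd A hA)) := by
  have pos : ∀ A (hA : MeasurableSet A), 0 ≤ Λ (sInd A hA) := fun A hA => by
    have h := hΛ (-sInd A hA)
    have e : ∀ z, max ((-sInd A hA) z) 0 = 0 := fun z => by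
      simp only [SimpleFunc.coe_neg, Pi.neg_apply, sInd_apply, sup_eq_right, Left.neg_nonpos_iff]
      exact indicator_nonneg (fun _ _ => zero_le_one) z
    simp only [e, integral_zero, map_neg] at h
    linarith
  have le : ∀ A (hA : MeasurableSet A), Λ (sInd A hA) ≤ ψ.real A := fun A hA => by
    have h := hΛ (sInd A hA)
    have e : ∀ z, max (sInd A hA z) 0 = sInd A hA z := fun z => by
      simp only [sInd_apply, sup_eq_left]
      exact indicator_nonneg (fun _ _ => zero_le_one) z
    simp only [e, integral_sInd] at h
    exact h
  have add : ∀ A B (hA : MeasurableSet A) (hB : MeasurableSet B), Disjoint A B →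
      Λ (sInd (A ∪ B) (hA.union hB)) = Λ (sInd A hA) + Λ (sInd B hB) := fun A B hA hB d => by
    rw [← map_add]; congr 1; ext z
    simp only [SimpleFunc.coe_add, Pi.add_apply, sInd_apply]
    rw [indicator_union_of_disjoint d]
  have emp : Λ (sInd ∅ MeasurableSet.empty) = 0 := by
    have := le ∅ MeasurableSet.empty
    have := pos ∅ MeasurableSet.empty
    simp at *; linarith
  let μ : Measure X := Measure.ofMeasurable (fun A hA => ENNReal.ofReal (Λ (sInd A hA)))
    (by simp [emp]) (by
      intro A hA hd
      have hU := MeasurableSet.iUnion hA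
      have part : ∀ n, ∑ i ∈ Finset.range n, Λ (sInd (A i) (hA i)) +
          Λ (sInd (⋃ i, A (i + n)) (.iUnion fun i => hA _)) = Λ (sInd (⋃ i, A i) hU) := by
        intro n
        induction n with
        | zero => simp
        | succ n ih =>
          rw [← ih, Finset.sum_range_succ, add_assoc, ← add]
          · congr 3
            rw [union_comm]
            ext x
            simp only [mem_union, mem_iUnion]
            constructor
            · rintro (⟨i, hi⟩ | hi)
              · exact ⟨i + 1, by convert hi using 2; ring⟩
              · exact ⟨0, by simpa using hi⟩
            · rintro ⟨i, hi⟩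
              cases i with
              | zero => right; simpa using hi
              | succ i => left; exact ⟨i, by convert hi using 2; ring⟩
          · rw [disjoint_iUnion_right]
            exact fun i => hd (by omega)
      have tail : Filter.Tendsto (fun n => ψ.real (⋃ i, A (i + n))) Filter.atTop (nhds 0) := by
        have hs : Summable fun i => ψ.real (A i) := by
          have := measure_iUnion (μ := ψ) hd hA
          exact ENNReal.summable_toReal (this ▸ measure_ne_top ψ _)
        have := tendsto_sum_nat_add (fun i => ψ.real (A i))
        refine this.congr fun n => ?_
        rw [measureReal_def, measure_iUnion (f := fun i => A (i + n))
          (fun i j hij => hd (by simpa using hij)) (fun i => hA _),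
          ENNReal.tsum_toReal_eq (fun _ => measure_ne_top _ _)]
        rfl
      have tail' : Filter.Tendsto
          (fun n => Λ (sInd (⋃ i, A (i + n)) (.iUnion fun i => hA _))) Filter.atTop (nhds 0) :=
        squeeze_zero (fun n => pos _ _) (fun n => le _ _) tail
      have hs : HasSum (fun i => Λ (sInd (A i) (hA i))) (Λ (sInd (⋃ i, A i) hU)) := by
        rw [hasSum_iff_tendsto_nat_of_nonneg (fun i => pos _ _)]
        have := (tendsto_const_nhds (x := Λ (sInd (⋃ i, A i) hU))).sub tail'
        rw [sub_zero] at this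
        refine this.congr fun n => ?_
        rw [← part n]; ring
      rw [← hs.tsum_eq, ENNReal.ofReal_tsum_of_nonneg (fun i => pos _ _) hs.summable])
  have hμ : ∀ A (hA : MeasurableSet A), μ A = ENNReal.ofReal (Λ (sInd A hA)) := fun A hA =>
    Measure.ofMeasurable_apply A hA
  refine ⟨μ, Measure.le_iff.2 fun A hA => ?_, hμ⟩
  rw [hμ A hA]
  exact ENNReal.ofReal_le_of_le_toReal (le A hA)

/-- **Feasible transshipment theorem.** Given finite nonnegative measures `α, β` on `J` with
`α(J) = β(J)` and a finite capacity measure `ψ` on `J × J`, there exists an `α`-`β`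
transshipment `μ` (i.e. `μ¹ = α`, `μ² = β`) with `μ ≤ ψ` iff
`ψ(S × T) ≥ α(S) + β(T) - α(J)` for all Borel sets `S, T`. -/
theorem stmt_8 {J : Type*} [MeasurableSpace J] [StandardBorelSpace J]
    (α β : Measure J) [IsFiniteMeasure α] [IsFiniteMeasure β]
    (hαβ : α univ = β univ)
    (ψ : Measure (J × J)) [IsFiniteMeasure ψ] :
    (∃ μ : Measure (J × J), μ.fst = α ∧ μ.snd = β ∧ μ ≤ ψ) ↔
      (∀ S T : Set J, MeasurableSet S → MeasurableSet T →
        (α S).toReal + (β T).toReal - (α univ).toReal ≤ (ψ (S ×ˢ T)).toReal) := by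
  constructor
  · rintro ⟨μ, rfl, rfl, hμ⟩ S T hS hT
    have : IsFiniteMeasure μ := isFiniteMeasure_of_le ψ hμ
    have h1 : μ.real (S ×ˢ T) ≤ ψ.real (S ×ˢ T) :=
      ENNReal.toReal_mono (measure_ne_top _ _) (hμ _)
    have h2 := measureReal_union_add_inter (μ := μ) (s := Prod.fst ⁻¹' S) (t := Prod.snd ⁻¹' T)
      (measurable_snd hT)
    have h3 : μ.real (Prod.fst ⁻¹' S ∪ Prod.snd ⁻¹' T) ≤ μ.real univ :=
      measureReal_mono (subset_univ _)
    rw [Measure.fst_apply hS, Measure.snd_apply hT, Measure.fst_univ]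
    rw [prod_eq] at *
    simp only [Measure.real] at *
    linarith
  · intro h
    obtain ⟨Λ, h1, h2, h3⟩ := exists_functional α β hαβ ψ h
    obtain ⟨μ, hle, hμ⟩ := exists_measure ψ Λ h1
    refine ⟨μ, ?_, ?_, hle⟩
    · ext S hS
      rw [Measure.fst_apply hS, hμ _ (measurable_fst hS)]
      have e : sInd _ (measurable_fst hS) = (sInd S hS).comp (Prod.fst : J × J → J) measurable_fst := by
        ext z; simp only [SimpleFunc.coe_comp, Function.comp, sInd_apply]; rfl
      rw [e, h2, integral_sInd, ofReal_measureReal]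
    · ext S hS
      rw [Measure.snd_apply hS, hμ _ (measurable_snd hS)]
      have e : sInd _ (measurable_snd hS) = (sInd S hS).comp (Prod.snd : J × J → J) measurable_snd := by
        ext z; simp only [SimpleFunc.coe_comp, Function.comp, sInd_apply]; rfl
      rw [e, h3, integral_sInd, ofReal_measureReal]
end

section
/- Let (J, 𝒜) be a standard Borel space, let α, β be Borel probability measures on J, and let E ⊆ J × J be a Borel set such that (J × J) \ E is a countable union of product sets A × B with A, B Borel subsets of J. Then there exists an α-β transshipment μ concentrated on E (i.e. μ((J × J) \ E) = 0) if and only if α(S) + β(T) ≤ 1 for any two Borel sets S, T ⊆ J with (S × T) ∩ E = ∅. -/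
open MeasureTheory Set

lemma aux_pos {K : Type*} [MeasurableSpace K]
    (α β : Measure K) [IsProbabilityMeasure α] [IsProbabilityMeasure β]
    (E : Set (K × K))
    (h : ∀ S T : Set K, MeasurableSet S → MeasurableSet T →
        (S ×ˢ T) ∩ E = ∅ → α S + β T ≤ 1)
    (f g : K → ℝ) (hf : Measurable f) (hg : Measurable g) (M : ℝ)
    (hfM : ∀ x, |f x| ≤ M) (hgM : ∀ x, |g x| ≤ M)
    (hfg : ∀ p ∈ E, 0 ≤ f p.1 + g p.2) :
    0 ≤ ∫ x, f x ∂α + ∫ x, g x ∂β := by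
  have hfi : Integrable f α :=
    Integrable.of_bound hf.aestronglyMeasurable M (Filter.Eventually.of_forall hfM)
  have hgi : Integrable g β :=
    Integrable.of_bound hg.aestronglyMeasurable M (Filter.Eventually.of_forall hgM)
  have hF : ∀ x, 0 ≤ f x + M := fun x => by linarith [(abs_le.1 (hfM x)).1]
  have hH : ∀ x, 0 ≤ M - g x := fun x => by linarith [(abs_le.1 (hgM x)).2]
  have key : ∫⁻ x, ENNReal.ofReal (M - g x) ∂β ≤ ∫⁻ x, ENNReal.ofReal (f x + M) ∂α := by
    rw [lintegral_eq_lintegral_meas_lt β (Filter.Eventually.of_forall hH) (by fun_prop),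
      lintegral_eq_lintegral_meas_lt α (Filter.Eventually.of_forall hF) (by fun_prop)]
    refine lintegral_mono fun t => ?_
    have hm : MeasurableSet {x | f x + M ≤ t} := measurableSet_le (by fun_prop) (by fun_prop)
    have h1 := h {x | f x + M ≤ t} {x | t < M - g x} hm
      (measurableSet_lt (by fun_prop) (by fun_prop)) (by
        ext p
        simp only [mem_inter_iff, mem_prod, mem_ofPred_eq, mem_empty_iff_false, iff_false]
        rintro ⟨⟨h1, h2⟩, h3⟩
        linarith [hfg p h3])
    have h2 : {x | t < f x + M} = {x | f x + M ≤ t}ᶜ := by ext; simp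
    show β {x | t < M - g x} ≤ α {x | t < f x + M}
    rw [h2, prob_compl_eq_one_sub hm]
    exact ENNReal.le_sub_of_add_le_left (measure_ne_top _ _) h1
  have h3 : ∫ x, (M - g x) ∂β ≤ ∫ x, (f x + M) ∂α := by
    rw [integral_eq_lintegral_of_nonneg_ae (Filter.Eventually.of_forall hH) (by fun_prop),
      integral_eq_lintegral_of_nonneg_ae (Filter.Eventually.of_forall hF) (by fun_prop)]
    refine ENNReal.toReal_mono ?_ key
    exact (Integrable.lintegral_lt_top (hfi.add (integrable_const M))).ne
  rw [integral_sub (integrable_const _) hgi, integral_add hfi (integrable_const _)] at h3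
  simp at h3
  linarith

lemma aux_section {V W : Type*} [AddCommGroup V] [Module ℝ V] [AddCommGroup W] [Module ℝ W]
    (T : V →ₗ[ℝ] W) : ∃ σ : LinearMap.range T →ₗ[ℝ] V, ∀ v, T (σ v) = v := by
  obtain ⟨σ, hσ⟩ := LinearMap.exists_rightInverse_of_surjective T.rangeRestrict
    (LinearMap.range_rangeRestrict T)
  exact ⟨σ, fun v => congrArg Subtype.val (LinearMap.congr_fun hσ v)⟩

abbrev CantorCube : Type := (ℕ → Bool) × (ℕ → Bool) × (ℕ → Bool)

lemma aux_compact {K : Type*} [TopologicalSpace K] [CompactSpace K] [T2Space K]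
    [SecondCountableTopology K] [HasOuterApproxClosed K] [MeasurableSpace K] [BorelSpace K]
    (α β : Measure K) [IsProbabilityMeasure α] [IsProbabilityMeasure β]
    (E : Set (K × K)) (hE : IsClosed E)
    (h : ∀ S T : Set K, MeasurableSet S → MeasurableSet T →
        (S ×ˢ T) ∩ E = ∅ → α S + β T ≤ 1) :
    ∃ μ : Measure (K × K), μ.fst = α ∧ μ.snd = β ∧ μ Eᶜ = 0 := by
  classical
  have : CompactSpace E := isCompact_iff_compactSpace.1 hE.isCompact
  have hint : ∀ (ν : Measure K) [IsProbabilityMeasure ν] (f : C(K, ℝ)), Integrable f ν :=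
    fun ν _ f => (BoundedContinuousFunction.mkOfCompact f).integrable ν
  let p1 : C(E, K) := ⟨fun p => p.1.1, by fun_prop⟩
  let p2 : C(E, K) := ⟨fun p => p.1.2, by fun_prop⟩
  let T : (C(K, ℝ) × C(K, ℝ)) →ₗ[ℝ] C(E, ℝ) :=
    { toFun := fun x => x.1.comp p1 + x.2.comp p2
      map_add' := by intro x y; ext; simp only [Prod.fst_add, Prod.snd_add, ContinuousMap.add_apply, ContinuousMap.comp_apply]; ring
      map_smul' := by intro c x; ext; simp [mul_add] }
  let L : (C(K, ℝ) × C(K, ℝ)) →ₗ[ℝ] ℝ :=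
    { toFun := fun x => ∫ t, x.1 t ∂α + ∫ t, x.2 t ∂β
      map_add' := by
        intro x y
        simp only [Prod.fst_add, Prod.snd_add, ContinuousMap.add_apply]
        rw [integral_add (hint α _) (hint α _), integral_add (hint β _) (hint β _)]
        ring
      map_smul' := by
        intro c x
        simp only [Prod.smul_fst, Prod.smul_snd, ContinuousMap.smul_apply, RingHom.id_apply,
          integral_smul, smul_add] }
  have hpos : ∀ x, 0 ≤ T x → 0 ≤ L x := by
    intro x hx
    refine aux_pos α β E h x.1 x.2 x.1.continuous.measurable x.2.continuous.measurable
      (max ‖x.1‖ ‖x.2‖) (fun t => (x.1.norm_coe_le_norm t).trans (le_max_left _ _))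
      (fun t => (x.2.norm_coe_le_norm t).trans (le_max_right _ _)) ?_
    intro p hp
    exact hx ⟨p, hp⟩
  obtain ⟨σ, hσ⟩ := aux_section T
  have hσ' : ∀ v, T (σ v) = v := hσ
  let s : PointedCone ℝ C(E, ℝ) := PointedCone.positive ℝ C(E, ℝ)
  let f : C(E, ℝ) →ₗ.[ℝ] ℝ := ⟨LinearMap.range T, L ∘ₗ σ⟩
  have hzero : ∀ x, T x = 0 → L x = 0 := by
    intro x hx
    apply le_antisymm
    · have := hpos (-x) (by simp [hx])
      rw [map_neg] at this
      linarith
    · exact hpos x (by simp [hx])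
  obtain ⟨G, hG1, hG2⟩ := riesz_extension s f (by
      intro v hv
      have hv' : 0 ≤ (v : C(E, ℝ)) := hv
      refine hpos (σ v) ?_
      rw [hσ']; exact hv') (by
      intro y
      refine ⟨⟨T (ContinuousMap.const K ‖y‖, 0), LinearMap.mem_range_self _ _⟩, ?_⟩
      show 0 ≤ T (ContinuousMap.const K ‖y‖, 0) + y
      intro p
      have := (abs_le.1 (y.norm_coe_le_norm p)).1
      simp [T]
      linarith)
  have hGT : ∀ x, G (T x) = L x := by
    intro x
    have h1 := hG1 ⟨T x, LinearMap.mem_range_self _ _⟩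
    have h2 : G (T x) = L (σ ⟨T x, LinearMap.mem_range_self _ _⟩) := h1
    rw [h2, ← sub_eq_zero, ← map_sub]
    apply hzero
    rw [map_sub, hσ', sub_self]
  let Λ : CompactlySupportedContinuousMap E ℝ →ₚ[ℝ] ℝ := PositiveLinearMap.mk₀
    { toFun := fun u => G u.toContinuousMap
      map_add' := fun u v => G.map_add u.toContinuousMap v.toContinuousMap
      map_smul' := fun c u => G.map_smul c u.toContinuousMap }
    (fun u hu => hG2 u.toContinuousMap hu)
  let ν := RealRMK.rieszMeasure Λ
  have hν : ∀ u : C(E, ℝ), ∫ p, u p ∂ν = G u := fun u =>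
    RealRMK.integral_rieszMeasure Λ (CompactlySupportedContinuousMap.continuousMapEquiv u)
  have : IsFiniteMeasure ν := inferInstanceAs (IsFiniteMeasure (RealRMK.rieszMeasure Λ))
  have hms : Measurable (Subtype.val : E → K × K) := measurable_subtype_coe
  refine ⟨ν.map Subtype.val, ?_, ?_, ?_⟩
  · apply ext_of_forall_integral_eq_of_IsFiniteMeasure
    intro u
    rw [Measure.fst, integral_map (by fun_prop) u.continuous.aestronglyMeasurable,
      integral_map hms.aemeasurable (by
        exact (u.continuous.comp continuous_fst).aestronglyMeasurable)]
    have h1 := hν (T (u.toContinuousMap, 0))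
    rw [hGT] at h1
    simpa [T, L, p1] using h1
  · apply ext_of_forall_integral_eq_of_IsFiniteMeasure
    intro u
    rw [Measure.snd, integral_map (by fun_prop) u.continuous.aestronglyMeasurable,
      integral_map hms.aemeasurable (by
        exact (u.continuous.comp continuous_snd).aestronglyMeasurable)]
    have h1 := hν (T (0, u.toContinuousMap))
    rw [hGT] at h1
    simpa [T, L, p2] using h1
  · rw [Measure.map_apply hms hE.measurableSet.compl]
    have : (Subtype.val : E → K × K) ⁻¹' Eᶜ = ∅ := by ext p; simp
    rw [this, measure_empty]

/-- **Strassen-type theorem.** Let `α, β` be Borel probability measures on a standard Borel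
space `J`, and let `E ⊆ J × J` be a Borel set whose complement is a countable union of
measurable product sets. There is an `α`-`β` transshipment `μ` concentrated on `E` iff
`α(S) + β(T) ≤ 1` for any Borel sets `S, T` with `(S × T) ∩ E = ∅`. -/
theorem stmt_10 {J : Type*} [MeasurableSpace J] [StandardBorelSpace J]
    (α β : Measure J) [IsProbabilityMeasure α] [IsProbabilityMeasure β]
    (E : Set (J × J)) (hE : MeasurableSet E)
    (A B : ℕ → Set J) (hA : ∀ n, MeasurableSet (A n)) (hB : ∀ n, MeasurableSet (B n))
    (hEc : Eᶜ = ⋃ n, A n ×ˢ B n) :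
    (∃ μ : Measure (J × J), μ.fst = α ∧ μ.snd = β ∧ μ Eᶜ = 0) ↔
      (∀ S T : Set J, MeasurableSet S → MeasurableSet T →
        (S ×ˢ T) ∩ E = ∅ → α S + β T ≤ 1) := by
  classical
  constructor
  · rintro ⟨μ, h1, h2, h0⟩ S T hS hT hST
    have hu : μ univ = 1 := by
      rw [← Measure.fst_univ, h1, measure_univ]
    have hST0 : μ (S ×ˢ T) = 0 := by
      refine measure_mono_null ?_ h0
      intro p hp hpE
      have : p ∈ (S ×ˢ T) ∩ E := ⟨hp, hpE⟩
      rw [hST] at this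
      exact this
    rw [← h1, ← h2, Measure.fst_apply hS, Measure.snd_apply hT,
      ← measure_union_add_inter _ (measurable_snd hT)]
    have : Prod.fst ⁻¹' S ∩ Prod.snd ⁻¹' T = S ×ˢ T := rfl
    rw [this, hST0, add_zero, ← hu]
    exact measure_mono (subset_univ _)
  · intro h
    let φ : J → CantorCube := fun x =>
      (MeasurableSpace.mapNatBool J x, fun n => decide (x ∈ A n), fun n => decide (x ∈ B n))
    have hdec : ∀ C : ℕ → Set J, (∀ n, MeasurableSet (C n)) →
        Measurable (fun x n => decide (x ∈ C n)) := by
      intro C hC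
      refine measurable_pi_lambda _ fun n => ?_
      refine measurable_to_bool ?_
      convert hC n
      ext x; simp
    have hφ : Measurable φ :=
      (MeasurableSpace.measurable_mapNatBool J).prodMk ((hdec A hA).prodMk (hdec B hB))
    have hinj : Function.Injective φ := fun x y hxy =>
      MeasurableSpace.injective_mapNatBool J (congrArg Prod.fst hxy)
    have hemb : MeasurableEmbedding φ := hφ.measurableEmbedding hinj
    have : IsProbabilityMeasure (α.map φ) := Measure.isProbabilityMeasure_map hφ.aemeasurable
    have : IsProbabilityMeasure (β.map φ) := Measure.isProbabilityMeasure_map hφ.aemeasurable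
    let E' : Set (CantorCube × CantorCube) := {p | ∀ n, ¬ (p.1.2.1 n = true ∧ p.2.2.2 n = true)}
    have hE' : IsClosed E' := by
      have : E' = ⋂ n, ({p : CantorCube × CantorCube | p.1.2.1 n = false} ∪ {p | p.2.2.2 n = false}) := by
        ext p; simp [E', imp_iff_not_or]
      rw [this]
      refine isClosed_iInter fun n => IsClosed.union ?_ ?_
      · exact isClosed_eq (by fun_prop) continuous_const
      · exact isClosed_eq (by fun_prop) continuous_const
    have hpre : Prod.map φ φ ⁻¹' E' = E := by
      rw [← compl_inj_iff, hEc]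
      ext p; simp [E', φ]
    obtain ⟨μ, h1, h2, h0⟩ := aux_compact (α.map φ) (β.map φ) E' hE' (by
      intro S T hS hT hST
      rw [Measure.map_apply hφ hS, Measure.map_apply hφ hT]
      refine h _ _ (hφ hS) (hφ hT) ?_
      rw [← hpre]
      ext p
      simp only [mem_empty_iff_false, iff_false]
      intro hp
      have : Prod.map φ φ p ∈ (S ×ˢ T) ∩ E' := ⟨hp.1, hp.2⟩
      rw [hST] at this
      exact this)
    have hemb2 : MeasurableEmbedding (Prod.map φ φ) := hemb.prodMap hemb
    have hr : MeasurableSet (range φ) := hemb.measurableSet_range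
    have hmap : (μ.comap (Prod.map φ φ)).map (Prod.map φ φ) = μ := by
      rw [hemb2.map_comap]
      apply Measure.restrict_eq_self_of_ae_mem
      have c1 : ∀ᵐ p ∂μ, p.1 ∈ range φ := by
        have : ∀ᵐ x ∂μ.fst, x ∈ range φ := by
          rw [h1]
          exact (ae_map_mem_range φ hr α)
        exact ae_of_ae_map measurable_fst.aemeasurable this
      have c2 : ∀ᵐ p ∂μ, p.2 ∈ range φ := by
        have : ∀ᵐ x ∂μ.snd, x ∈ range φ := by
          rw [h2]
          exact (ae_map_mem_range φ hr β)
        exact ae_of_ae_map measurable_snd.aemeasurable this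
      filter_upwards [c1, c2] with p hp1 hp2
      rw [range_prodMap]
      exact ⟨hp1, hp2⟩
    have hinjm : ∀ ν₁ ν₂ : Measure J, ν₁.map φ = ν₂.map φ → ν₁ = ν₂ := by
      intro ν₁ ν₂ hh
      rw [← hemb.comap_map ν₁, hh, hemb.comap_map]
    refine ⟨μ.comap (Prod.map φ φ), ?_, ?_, ?_⟩
    · apply hinjm
      rw [← h1]
      conv_rhs => rw [← hmap]
      rw [Measure.fst, Measure.fst, Measure.map_map hφ measurable_fst,
        Measure.map_map measurable_fst hemb2.measurable]
      rfl
    · apply hinjm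
      rw [← h2]
      conv_rhs => rw [← hmap]
      rw [Measure.snd, Measure.snd, Measure.map_map hφ measurable_snd,
        Measure.map_map measurable_snd hemb2.measurable]
      rfl
    · have : BorelSpace CantorCube := inferInstance
      have : OpensMeasurableSpace (CantorCube × CantorCube) := Prod.opensMeasurableSpace
      rw [← hmap, Measure.map_apply hemb2.measurable hE'.measurableSet.compl,
        preimage_compl, hpre] at h0
      exact h0
end

section
/- Let (J, 𝒜) be a standard Borel space and let σ and ψ be finite nonnegative Borel measures on J × J, both symmetric (invariant under swapping the two coordinates). Then the following are equivalent: (1) for every ε > 0 there exists a multicommodity flow (φ_{st})_{(s,t) ∈ J×J} for the demand measure σ whose overload over ψ is less than ε, i.e. sup over Borel S ⊆ J × J of (φ_F(S) − ψ(S)) taken in total variation, ‖(φ_F − ψ)₊‖ < ε, where φ_F(S) = ∫_{J×J} φ_{st}(S) dσ(s,t) is the total load; (2) D(σ) ≤ D(ψ) for every metrical bounded linear functional D on the space of finite signed Borel measures on J × J. -/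
open MeasureTheory Set
open scoped ENNReal

/-- A bounded linear functional `D` on the space of finite signed Borel measures on `J × J`
(with the total variation norm) is *metrical* if: it vanishes on measures concentrated on the
diagonal; it is invariant under swapping the two coordinates; and it satisfies the triangle
inequality `D(κ¹²) + D(κ²³) ≥ D(κ¹³)` for every finite nonnegative measure `κ` on `J³`. -/
def IsMetrical {J : Type*} [MeasurableSpace J]
    (D : SignedMeasure (J × J) →ₗ[ℝ] ℝ) : Prop :=
  (∃ C : ℝ, ∀ μ : SignedMeasure (J × J), |D μ| ≤ C * (μ.totalVariation univ).toReal) ∧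
  (∀ μ : SignedMeasure (J × J), μ.totalVariation {p : J × J | p.1 = p.2}ᶜ = 0 → D μ = 0) ∧
  (∀ μ : SignedMeasure (J × J), D (μ.map Prod.swap) = D μ) ∧
  (∀ (κ : Measure (J × J × J)) [IsFiniteMeasure κ],
    D ((κ.map fun t => (t.1, t.2.2)).toSignedMeasure) ≤
      D ((κ.map fun t => (t.1, t.2.1)).toSignedMeasure) +
        D ((κ.map fun t => t.2).toSignedMeasure))


namespace MCF

open ProbabilityTheory
open scoped NNReal

variable {J : Type*} [MeasurableSpace J]

/-- A measurable family of finite measures, each an s-t flow of value one. -/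
structure Flw (φ : J × J → Measure (J × J)) : Prop where
  meas : Measurable φ
  fin : ∀ p, φ p univ ≠ ∞
  cons : ∀ (p : J × J) (U : Set J), MeasurableSet U →
    φ p (Prod.fst ⁻¹' U) + Measure.dirac p.2 U = φ p (Prod.snd ⁻¹' U) + Measure.dirac p.1 U

lemma Flw.ev {φ : J × J → Measure (J × J)} (h : Flw φ) {S : Set (J × J)} (hS : MeasurableSet S) :
    Measurable fun p => φ p S := (Measure.measurable_coe hS).comp h.meas

lemma Flw.load {φ : J × J → Measure (J × J)} (h : Flw φ) (μ : Measure (J × J))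
    {S : Set (J × J)} (hS : MeasurableSet S) : μ.bind φ S = ∫⁻ p, φ p S ∂μ :=
  Measure.bind_apply hS h.meas.aemeasurable

lemma flw_dirac : Flw (fun p : J × J => Measure.dirac p) where
  meas := Measure.measurable_dirac
  fin p := by simp
  cons p U hU := by
    rw [Measure.dirac_apply' _ (measurable_fst hU), Measure.dirac_apply' _ (measurable_snd hU),
      Measure.dirac_apply' _ hU, Measure.dirac_apply' _ hU, add_comm]
    rfl

lemma Flw.combo {φ₁ φ₂ : J × J → Measure (J × J)} (h₁ : Flw φ₁) (h₂ : Flw φ₂)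
    {f g : J × J → ℝ≥0∞} (hf : Measurable f) (hg : Measurable g) (hfg : ∀ p, f p + g p = 1) :
    Flw (fun p => f p • φ₁ p + g p • φ₂ p) where
  meas := by
    refine Measure.measurable_of_measurable_coe _ fun S hS => ?_
    simp only [Measure.add_apply, Measure.smul_apply, smul_eq_mul]
    exact (hf.mul (h₁.ev hS)).add (hg.mul (h₂.ev hS))
  fin p := by
    have hf1 : f p ≠ ∞ := fun h => by simpa [h] using hfg p
    have hg1 : g p ≠ ∞ := fun h => by simpa [h] using hfg p
    simp only [Measure.add_apply, Measure.smul_apply, smul_eq_mul]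
    exact ENNReal.add_ne_top.2 ⟨ENNReal.mul_ne_top hf1 (h₁.fin p), ENNReal.mul_ne_top hg1 (h₂.fin p)⟩
  cons p U hU := by
    simp only [Measure.add_apply, Measure.smul_apply, smul_eq_mul]
    have e1 := h₁.cons p U hU
    have e2 := h₂.cons p U hU
    calc _ = f p * (φ₁ p (Prod.fst ⁻¹' U)) + g p * (φ₂ p (Prod.fst ⁻¹' U))
              + (f p + g p) * Measure.dirac p.2 U := by rw [hfg, one_mul]
      _ = f p * (φ₁ p (Prod.fst ⁻¹' U) + Measure.dirac p.2 U)
          + g p * (φ₂ p (Prod.fst ⁻¹' U) + Measure.dirac p.2 U) := by ring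
      _ = f p * (φ₁ p (Prod.snd ⁻¹' U)) + g p * (φ₂ p (Prod.snd ⁻¹' U))
              + (f p + g p) * Measure.dirac p.1 U := by rw [e1, e2]; ring
      _ = _ := by rw [hfg, one_mul]

lemma Flw.ite {φ₁ φ₂ : J × J → Measure (J × J)} (h₁ : Measurable φ₁) (h₂ : Flw φ₂)
    {A : Set (J × J)} [DecidablePred (· ∈ A)] (hA : MeasurableSet A) (hfin : ∀ p ∈ A, φ₁ p univ ≠ ∞)
    (hc : ∀ p ∈ A, ∀ (U : Set J), MeasurableSet U →
      φ₁ p (Prod.fst ⁻¹' U) + Measure.dirac p.2 U = φ₁ p (Prod.snd ⁻¹' U) + Measure.dirac p.1 U) :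
    Flw (fun p => if p ∈ A then φ₁ p else φ₂ p) where
  meas := Measurable.ite hA h₁ h₂.meas
  fin p := by
    by_cases hp : p ∈ A
    · simpa [hp] using hfin p hp
    · simpa [hp] using h₂.fin p
  cons p U hU := by
    by_cases hp : p ∈ A
    · simpa [hp] using hc p hp U hU
    · simpa [hp] using h₂.cons p U hU

/-- Combining flows for two demand measures. -/
lemma exists_flw_add {φ₁ φ₂ : J × J → Measure (J × J)} (h₁ : Flw φ₁) (h₂ : Flw φ₂)
    (μ₁ μ₂ : Measure (J × J)) [IsFiniteMeasure μ₁] [IsFiniteMeasure μ₂] :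
    ∃ φ, Flw φ ∧ (μ₁ + μ₂).bind φ = μ₁.bind φ₁ + μ₂.bind φ₂ := by
  set μ := μ₁ + μ₂ with hμ
  have hle : μ₁ ≤ μ := by rw [hμ]; exact Measure.le_add_right le_rfl
  have hac : μ₁ ≪ μ := hle.absolutelyContinuous
  set f : J × J → ℝ≥0∞ := fun p => min (μ₁.rnDeriv μ p) 1 with hf
  have hfm : Measurable f := (Measure.measurable_rnDeriv _ _).min measurable_const
  have hfae : f =ᵐ[μ] μ₁.rnDeriv μ := by
    filter_upwards [Measure.rnDeriv_le_one_of_le hle] with p hp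
    exact min_eq_left hp
  have hf1 : ∀ p, f p ≤ 1 := fun p => min_le_right _ _
  set g : J × J → ℝ≥0∞ := fun p => 1 - f p with hg
  have hgm : Measurable g := measurable_const.sub hfm
  have hfg : ∀ p, f p + g p = 1 := fun p => add_tsub_cancel_of_le (hf1 p)
  have e1 : μ.withDensity f = μ₁ := by
    rw [withDensity_congr_ae hfae, Measure.withDensity_rnDeriv_eq _ _ hac]
  have e2 : μ.withDensity g = μ₂ := by
    have : μ₁ + μ.withDensity g = μ₁ + μ₂ := by
      rw [← e1, ← withDensity_add_left hfm, e1]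
      have : f + g = 1 := funext hfg
      rw [this, withDensity_one]
    ext S hS
    have h := congrArg (fun m : Measure (J × J) => m S) this
    simp only [Measure.add_apply] at h
    exact (ENNReal.add_right_inj (measure_ne_top _ _)).1 h
  have hF := h₁.combo h₂ hfm hgm hfg
  refine ⟨_, hF, ?_⟩
  ext S hS
  rw [Measure.add_apply, hF.load _ hS, h₁.load _ hS, h₂.load _ hS]
  conv_rhs => rw [← e1, ← e2]
  rw [lintegral_withDensity_eq_lintegral_mul _ hfm (h₁.ev hS),
    lintegral_withDensity_eq_lintegral_mul _ hgm (h₂.ev hS),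
    ← lintegral_add_left (hfm.mul (h₁.ev hS))]
  rfl

/-- Composing flows along a measure on triples. -/
lemma exists_flw_comp [StandardBorelSpace J] [Nonempty J] {φ₁ φ₂ : J × J → Measure (J × J)}
    (h₁ : Flw φ₁) (h₂ : Flw φ₂)
    (κ : Measure (J × J × J)) [IsFiniteMeasure κ]
    (hl₁ : (κ.map fun t => (t.1, t.2.1)).bind φ₁ univ ≠ ∞)
    (hl₂ : (κ.map fun t => t.2).bind φ₂ univ ≠ ∞) :
    ∃ φ, Flw φ ∧ (κ.map fun t => (t.1, t.2.2)).bind φ =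
      (κ.map fun t => (t.1, t.2.1)).bind φ₁ + (κ.map fun t => t.2).bind φ₂ := by
  classical
  -- move the middle coordinate last
  set ρ : Measure ((J × J) × J) := κ.map (fun t => ((t.1, t.2.2), t.2.1)) with hρ
  have hm : Measurable (fun t : J × J × J => ((t.1, t.2.2), t.2.1)) := by fun_prop
  have hfst : ρ.fst = κ.map fun t => (t.1, t.2.2) := by
    rw [hρ, Measure.fst, Measure.map_map measurable_fst hm]; rfl
  set k := ρ.condKernel with hk
  set θ : (J × J) × J → Measure (J × J) := fun q => φ₁ (q.1.1, q.2) + φ₂ (q.2, q.1.2) with hθ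
  have hθS : ∀ S, MeasurableSet S → Measurable fun q => θ q S := fun S hS => by
    simp only [hθ, Measure.add_apply]
    have a := (h₁.ev hS).comp (f := fun q : (J × J) × J => (q.1.1, q.2)) (by fun_prop)
    have b := (h₂.ev hS).comp (f := fun q : (J × J) × J => (q.2, q.1.2)) (by fun_prop)
    exact a.add b
  have hθm : Measurable θ := Measure.measurable_of_measurable_coe _ hθS
  set G : J × J → Measure (J × J) := fun p => (k p).bind (fun y => θ (p, y)) with hG
  have hGS : ∀ p S, MeasurableSet S → G p S = ∫⁻ y, θ (p, y) S ∂(k p) := fun p S hS =>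
    Measure.bind_apply hS (hθm.comp measurable_prodMk_left).aemeasurable
  have hGm : Measurable G := by
    refine Measure.measurable_of_measurable_coe _ fun S hS => ?_
    simp only [hGS _ _ hS]
    exact Measurable.lintegral_kernel_prod_right' (κ := k) (hθS S hS)
  have hGint : ∀ S, MeasurableSet S → ∫⁻ p, G p S ∂ρ.fst =
      (κ.map fun t => (t.1, t.2.1)).bind φ₁ S + (κ.map fun t => t.2).bind φ₂ S := fun S hS => by
    simp only [hGS _ _ hS]
    rw [hk, Measure.lintegral_condKernel (hθS S hS), hρ, lintegral_map (hθS S hS) hm,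
      h₁.load _ hS, h₂.load _ hS, lintegral_map (h₁.ev hS) (by fun_prop),
      lintegral_map (h₂.ev hS) (by fun_prop), ← lintegral_add_left]
    · rfl
    · exact (h₁.ev hS).comp (by fun_prop)
  set A : Set (J × J) := {p | G p univ ≠ ∞} with hA
  have hGu : Measurable fun p => G p univ := (Measure.measurable_coe MeasurableSet.univ).comp hGm
  have hAm : MeasurableSet A := (hGu (measurableSet_singleton ∞)).compl
  have hAae : ∀ᵐ p ∂ρ.fst, p ∈ A := by
    have : ∫⁻ p, G p univ ∂ρ.fst ≠ ∞ := by
      rw [hGint _ MeasurableSet.univ]; exact ENNReal.add_ne_top.2 ⟨hl₁, hl₂⟩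
    filter_upwards [ae_lt_top hGu this] with p hp
    exact hp.ne
  have hF : Flw (fun p => if p ∈ A then G p else Measure.dirac p) := by
    refine Flw.ite hGm flw_dirac hAm (fun p hp => hp) ?_
    intro p _ U hU
    have hk1 : k p univ = 1 := measure_univ
    have key : ∀ y, θ (p, y) (Prod.fst ⁻¹' U) + Measure.dirac p.2 U
        = θ (p, y) (Prod.snd ⁻¹' U) + Measure.dirac p.1 U := fun y => by
      have e1 := h₁.cons (p.1, y) U hU
      have e2 := h₂.cons (y, p.2) U hU
      simp only [hθ, Measure.add_apply] at e1 e2 ⊢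
      have hfin : Measure.dirac y U ≠ ∞ := measure_ne_top _ _
      rw [← ENNReal.add_left_inj hfin]
      calc _ = (φ₁ (p.1, y) (Prod.fst ⁻¹' U) + Measure.dirac y U)
            + (φ₂ (y, p.2) (Prod.fst ⁻¹' U) + Measure.dirac p.2 U) := by ring
        _ = _ := by rw [e1, e2]; ring
    rw [hGS _ _ (measurable_fst hU), hGS _ _ (measurable_snd hU)]
    have h := congrArg (fun F : J → ℝ≥0∞ => ∫⁻ y, F y ∂(k p)) (funext key)
    rw [lintegral_add_right _ measurable_const, lintegral_add_right _ measurable_const] at h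
    simpa [hk1] using h
  refine ⟨_, hF, ?_⟩
  ext S hS
  rw [← hfst, hF.load _ hS, Measure.add_apply, ← hGint S hS]
  refine lintegral_congr_ae ?_
  filter_upwards [hAae] with p hp
  simp [hp]

lemma zero_flw_diag [StandardBorelSpace J] :
    ∃ φ, Flw φ ∧ ∀ μ : Measure (J × J), μ {p : J × J | p.1 = p.2}ᶜ = 0 → μ.bind φ = 0 := by
  classical
  have hd : MeasurableSet {p : J × J | p.1 = p.2} := measurableSet_eq_fun measurable_fst measurable_snd
  have hF : Flw (fun p : J × J => if p ∈ {p : J × J | p.1 = p.2} then (0 : Measure (J × J))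
      else Measure.dirac p) := by
    refine Flw.ite measurable_const flw_dirac hd (by simp) ?_
    intro p hp U hU
    have : p.1 = p.2 := hp
    simp [this]
  refine ⟨_, hF, fun μ hμ => ?_⟩
  ext S hS
  rw [hF.load _ hS]
  have : ∀ᵐ p ∂μ, p ∈ {p : J × J | p.1 = p.2} := hμ
  rw [lintegral_congr_ae (g := fun _ => 0)]
  · simp
  · filter_upwards [this] with p hp
    simp only [hp, if_true]; rfl

/-- The set of attainable costs of flows for the demand `μ`. -/
def costs (l : Measure (J × J) → ℝ) (μ : Measure (J × J)) : Set ℝ :=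
  {x | ∃ φ, Flw φ ∧ IsFiniteMeasure (μ.bind φ) ∧ l (μ.bind φ) = x}

/-- Minimal cost. -/
noncomputable def mc (l : Measure (J × J) → ℝ) (μ : Measure (J × J)) : ℝ := sInf (costs l μ)

/-- A cost functional on finite measures. -/
structure Cost {X : Type*} [MeasurableSpace X] (l : Measure X → ℝ) : Prop where
  add : ∀ μ ν : Measure X, IsFiniteMeasure μ → IsFiniteMeasure ν → l (μ + ν) = l μ + l ν
  smul : ∀ (c : ℝ≥0) (μ : Measure X), IsFiniteMeasure μ → l (c • μ) = c * l μ
  nonneg : ∀ μ : Measure X, IsFiniteMeasure μ → 0 ≤ l μ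
  le : ∀ μ : Measure X, IsFiniteMeasure μ → l μ ≤ μ.real univ

lemma Cost.zero {X : Type*} [MeasurableSpace X] {l : Measure X → ℝ} (h : Cost l) : l 0 = 0 := by
  have := h.smul 0 0 inferInstance
  simpa using this

variable {l : Measure (J × J) → ℝ}

lemma bind_dirac_self (μ : Measure (J × J)) : μ.bind (fun p => Measure.dirac p) = μ :=
  Measure.bind_dirac

lemma costs_bdd (hl : Cost l) (μ : Measure (J × J)) : BddBelow (costs l μ) := by
  refine ⟨0, ?_⟩
  rintro x ⟨φ, _, hf, rfl⟩
  exact hl.nonneg _ hf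

lemma mem_costs_self (μ : Measure (J × J)) [IsFiniteMeasure μ] : l μ ∈ costs l μ :=
  ⟨_, flw_dirac, by rw [bind_dirac_self]; infer_instance, by rw [bind_dirac_self]⟩

lemma mc_le (hl : Cost l) {μ : Measure (J × J)} {φ} (h : Flw φ) (hf : IsFiniteMeasure (μ.bind φ)) :
    mc l μ ≤ l (μ.bind φ) := csInf_le (costs_bdd hl μ) ⟨φ, h, hf, rfl⟩

lemma le_mc {μ : Measure (J × J)} [IsFiniteMeasure μ] {r : ℝ}
    (h : ∀ φ, Flw φ → IsFiniteMeasure (μ.bind φ) → r ≤ l (μ.bind φ)) : r ≤ mc l μ := by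
  refine le_csInf ⟨_, mem_costs_self μ⟩ ?_
  rintro x ⟨φ, h1, h2, rfl⟩
  exact h φ h1 h2

lemma exists_near {μ : Measure (J × J)} [IsFiniteMeasure μ] {δ : ℝ} (hδ : 0 < δ) :
    ∃ φ, Flw φ ∧ IsFiniteMeasure (μ.bind φ) ∧ l (μ.bind φ) < mc l μ + δ := by
  obtain ⟨x, ⟨φ, h1, h2, rfl⟩, hx⟩ := exists_lt_of_csInf_lt ⟨_, mem_costs_self (l := l) μ⟩
    (show sInf (costs l μ) < mc l μ + δ from lt_add_of_pos_right _ hδ)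
  exact ⟨φ, h1, h2, hx⟩

lemma mc_le_self (hl : Cost l) (μ : Measure (J × J)) [IsFiniteMeasure μ] : mc l μ ≤ l μ :=
  csInf_le (costs_bdd hl μ) (mem_costs_self μ)

lemma Flw.bind_add {φ : J × J → Measure (J × J)} (h : Flw φ) (μ ν : Measure (J × J)) :
    (μ + ν).bind φ = μ.bind φ + ν.bind φ := by
  ext S hS
  rw [Measure.add_apply, h.load _ hS, h.load _ hS, h.load _ hS, lintegral_add_measure]

lemma fin_of_add {X : Type*} [MeasurableSpace X] {μ ν : Measure X} (h : IsFiniteMeasure (μ + ν)) :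
    IsFiniteMeasure μ ∧ IsFiniteMeasure ν := by
  have := h.measure_univ_lt_top
  rw [Measure.add_apply, ENNReal.add_lt_top] at this
  exact ⟨⟨this.1⟩, ⟨this.2⟩⟩

lemma mc_cost (hl : Cost l) : Cost (mc l) where
  add μ ν hμ hν := by
    apply le_antisymm
    · refine le_of_forall_pos_le_add fun δ hδ => ?_
      obtain ⟨φ₁, a1, a2, a3⟩ := exists_near (l := l) (μ := μ) (half_pos hδ)
      obtain ⟨φ₂, b1, b2, b3⟩ := exists_near (l := l) (μ := ν) (half_pos hδ)
      obtain ⟨φ, c1, c2⟩ := exists_flw_add a1 b1 μ ν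
      have := mc_le hl c1 (μ := μ + ν) (by rw [c2]; infer_instance)
      rw [c2, hl.add _ _ a2 b2] at this
      linarith
    · refine le_mc fun φ h1 h2 => ?_
      rw [h1.bind_add] at h2 ⊢
      obtain ⟨h3, h4⟩ := fin_of_add h2
      rw [hl.add _ _ h3 h4]
      exact add_le_add (mc_le hl h1 h3) (mc_le hl h1 h4)
  smul c μ hμ := by
    rcases eq_or_ne c 0 with rfl | hc
    · simp only [zero_smul, NNReal.coe_zero, zero_mul]
      apply le_antisymm
      · have := mc_le_self hl (0 : Measure (J × J))
        rwa [hl.zero] at this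
      · exact le_mc fun φ h1 h2 => hl.nonneg _ h2
    · have key : ∀ (c : ℝ≥0) (μ : Measure (J × J)), IsFiniteMeasure μ →
          mc l (c • μ) ≤ c * mc l μ := by
        intro c μ hμ
        refine le_of_forall_pos_le_add fun δ hδ => ?_
        have hc1 : (0:ℝ) < c + 1 := by positivity
        obtain ⟨φ, a1, a2, a3⟩ := exists_near (l := l) (μ := μ) (div_pos hδ hc1)
        have e : (c • μ).bind φ = c • μ.bind φ := Measure.bind_smul _ _ _
        have := mc_le hl a1 (μ := c • μ) (by rw [e]; infer_instance)
        rw [e, hl.smul _ _ a2] at this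
        have h2 : (c:ℝ) * l (μ.bind φ) ≤ c * (mc l μ + δ / (c + 1)) :=
          mul_le_mul_of_nonneg_left a3.le c.coe_nonneg
        have h3 : (c:ℝ) * (δ / (c + 1)) ≤ δ := by
          rw [mul_div_assoc', div_le_iff₀ hc1]; nlinarith
        linarith
      apply le_antisymm (key c μ hμ)
      have := key c⁻¹ (c • μ) inferInstance
      rw [smul_smul, inv_mul_cancel₀ hc, one_smul] at this
      have hcp : (0:ℝ) < c := by positivity
      rw [NNReal.coe_inv] at this
      have h5 := mul_le_mul_of_nonneg_left this hcp.le
      rwa [← mul_assoc, mul_inv_cancel₀ hcp.ne', one_mul] at h5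
  nonneg μ hμ := le_mc fun φ h1 h2 => hl.nonneg _ h2
  le μ hμ := (mc_le_self hl μ).trans (hl.le _ hμ)

lemma mc_triangle [StandardBorelSpace J] (hl : Cost l) (κ : Measure (J × J × J))
    [IsFiniteMeasure κ] :
    mc l (κ.map fun t => (t.1, t.2.2)) ≤
      mc l (κ.map fun t => (t.1, t.2.1)) + mc l (κ.map fun t => t.2) := by
  rcases isEmpty_or_nonempty J with hJ | hJ
  · have h0 : κ = 0 := Measure.eq_zero_of_isEmpty κ
    simp [h0, (mc_cost hl).zero]
  · refine le_of_forall_pos_le_add fun δ hδ => ?_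
    obtain ⟨φ₁, a1, a2, a3⟩ := exists_near (l := l) (μ := κ.map fun t => (t.1, t.2.1)) (half_pos hδ)
    obtain ⟨φ₂, b1, b2, b3⟩ := exists_near (l := l) (μ := κ.map fun t => t.2) (half_pos hδ)
    obtain ⟨φ, c1, c2⟩ := exists_flw_comp a1 b1 κ (measure_ne_top _ _) (measure_ne_top _ _)
    have := mc_le hl c1 (μ := κ.map fun t => (t.1, t.2.2)) (by rw [c2]; infer_instance)
    rw [c2, hl.add _ _ a2 b2] at this
    linarith

lemma mc_diag [StandardBorelSpace J] (hl : Cost l) (μ : Measure (J × J)) [IsFiniteMeasure μ]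
    (h : μ {p : J × J | p.1 = p.2}ᶜ = 0) : mc l μ = 0 := by
  obtain ⟨φ, h1, h2⟩ := zero_flw_diag (J := J)
  have := mc_le hl h1 (μ := μ) (by rw [h2 μ h]; infer_instance)
  rw [h2 μ h, hl.zero] at this
  exact le_antisymm this ((mc_cost hl).nonneg _ inferInstance)

section ext
variable {X : Type*} [MeasurableSpace X]

lemma signed_eq (s : SignedMeasure X) :
    s = s.toJordanDecomposition.posPart.toSignedMeasure
      - s.toJordanDecomposition.negPart.toSignedMeasure :=
  (SignedMeasure.toSignedMeasure_toJordanDecomposition s).symm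

lemma Cost.sub_eq {l : Measure X → ℝ} (hl : Cost l) {a b c d : Measure X} [IsFiniteMeasure a]
    [IsFiniteMeasure b] [IsFiniteMeasure c] [IsFiniteMeasure d]
    (h : a.toSignedMeasure - b.toSignedMeasure = c.toSignedMeasure - d.toSignedMeasure) :
    l a - l b = l c - l d := by
  have h1 : (a + d).toSignedMeasure = (c + b).toSignedMeasure := by
    rw [Measure.toSignedMeasure_add, Measure.toSignedMeasure_add]
    rwa [sub_eq_sub_iff_add_eq_add] at h
  rw [Measure.toSignedMeasure_eq_toSignedMeasure_iff] at h1
  have h2 := hl.add a d inferInstance inferInstance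
  rw [h1, hl.add c b inferInstance inferInstance] at h2
  linarith

lemma Cost.extend {l : Measure X → ℝ} (hl : Cost l) :
    ∃ D : SignedMeasure X →ₗ[ℝ] ℝ, (∀ s : SignedMeasure X,
      D s = l s.toJordanDecomposition.posPart - l s.toJordanDecomposition.negPart) ∧
      ∀ (μ : Measure X) [IsFiniteMeasure μ], D μ.toSignedMeasure = l μ := by
  refine ⟨{ toFun := fun s => l s.toJordanDecomposition.posPart - l s.toJordanDecomposition.negPart
            map_add' := ?_, map_smul' := ?_ }, fun s => rfl, ?_⟩
  · intro s t
    set a := s.toJordanDecomposition.posPart with ha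
    set b := s.toJordanDecomposition.negPart with hb
    set c := t.toJordanDecomposition.posPart with hc
    set d := t.toJordanDecomposition.negPart with hd
    have h1 : l (s + t).toJordanDecomposition.posPart - l (s + t).toJordanDecomposition.negPart
        = l (a + c) - l (b + d) := by
      apply hl.sub_eq
      rw [← signed_eq, Measure.toSignedMeasure_add, Measure.toSignedMeasure_add]
      conv_lhs => rw [signed_eq s, signed_eq t]
      abel
    rw [h1, hl.add a c inferInstance inferInstance, hl.add b d inferInstance inferInstance]
    ring
  · intro r s
    simp only [RingHom.id_apply, smul_eq_mul]
    rw [SignedMeasure.toJordanDecomposition_smul_real]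
    rcases le_or_gt 0 r with hr | hr
    · rw [JordanDecomposition.real_smul_posPart_nonneg _ _ hr,
        JordanDecomposition.real_smul_negPart_nonneg _ _ hr,
        hl.smul _ _ inferInstance, hl.smul _ _ inferInstance, Real.coe_toNNReal _ hr]
      ring
    · rw [JordanDecomposition.real_smul_posPart_neg _ _ hr,
        JordanDecomposition.real_smul_negPart_neg _ _ hr,
        hl.smul _ _ inferInstance, hl.smul _ _ inferInstance,
        Real.coe_toNNReal _ (by linarith : 0 ≤ -r)]
      ring
  · intro μ _
    have : l μ = l μ - l 0 := by rw [hl.zero, sub_zero]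
    rw [this]
    apply hl.sub_eq
    rw [← signed_eq, Measure.toSignedMeasure_zero, sub_zero]

lemma map_toSigned {Y : Type*} [MeasurableSpace Y] (μ : Measure X) [IsFiniteMeasure μ] (f : X → Y)
    (hf : Measurable f) : μ.toSignedMeasure.map f = (μ.map f).toSignedMeasure := by
  ext S hS
  rw [VectorMeasure.map_apply _ hf hS, Measure.toSignedMeasure_apply_measurable (hf hS),
    Measure.toSignedMeasure_apply_measurable hS, map_measureReal_apply hf hS]

lemma tv_toSigned (μ : Measure X) [IsFiniteMeasure μ] :
    μ.toSignedMeasure.totalVariation = μ := by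
  let j : JordanDecomposition X := ⟨μ, 0, Measure.MutuallySingular.zero_right⟩
  have : μ.toSignedMeasure = j.toSignedMeasure := by
    simp [JordanDecomposition.toSignedMeasure, j]
  rw [SignedMeasure.totalVariation, this, JordanDecomposition.toJordanDecomposition_toSignedMeasure]
  simp [j]

end ext

/-- The symmetrised minimal cost is represented by a metrical functional. -/
lemma metrical_of_cost [StandardBorelSpace J] (hl : Cost l) :
    ∃ D : SignedMeasure (J × J) →ₗ[ℝ] ℝ, IsMetrical D ∧
      ∀ (μ : Measure (J × J)) [IsFiniteMeasure μ],
        D μ.toSignedMeasure = (mc l μ + mc l (μ.map Prod.swap)) / 2 := by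
  have hc := mc_cost hl
  have hs : Cost (fun μ => (mc l μ + mc l (μ.map Prod.swap)) / 2) :=
    { add := fun μ ν _ _ => by
        rw [Measure.map_add _ _ measurable_swap, hc.add μ ν inferInstance inferInstance,
          hc.add (μ.map Prod.swap) (ν.map Prod.swap) inferInstance inferInstance]
        ring
      smul := fun c μ _ => by
        rw [Measure.map_smul, hc.smul _ _ inferInstance, hc.smul _ _ inferInstance]
        ring
      nonneg := fun μ _ => by
        have a := hc.nonneg μ inferInstance
        have b := hc.nonneg (μ.map Prod.swap) inferInstance
        positivity
      le := fun μ _ => by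
        have a := hc.le μ inferInstance
        have b := hc.le (μ.map Prod.swap) inferInstance
        rw [map_measureReal_apply measurable_swap MeasurableSet.univ, preimage_univ] at b
        linarith }
  obtain ⟨D, hD, hD'⟩ := hs.extend
  have hd : MeasurableSet {p : J × J | p.1 = p.2} := measurableSet_eq_fun measurable_fst measurable_snd
  refine ⟨D, ⟨⟨1, fun μ => ?_⟩, fun μ hμ => ?_, fun μ => ?_, fun κ _ => ?_⟩, fun μ _ => hD' μ⟩
  · rw [hD]
    have a := hs.nonneg μ.toJordanDecomposition.posPart inferInstance
    have b := hs.nonneg μ.toJordanDecomposition.negPart inferInstance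
    have a' := hs.le μ.toJordanDecomposition.posPart inferInstance
    have b' := hs.le μ.toJordanDecomposition.negPart inferInstance
    have : (μ.totalVariation univ).toReal = μ.toJordanDecomposition.posPart.real univ
        + μ.toJordanDecomposition.negPart.real univ := by
      rw [SignedMeasure.totalVariation]
      exact measureReal_add_apply
    rw [this, one_mul, abs_le]
    constructor <;> linarith
  · rw [SignedMeasure.totalVariation, Measure.add_apply, add_eq_zero] at hμ
    have key : ∀ ν : Measure (J × J), IsFiniteMeasure ν → ν {p : J × J | p.1 = p.2}ᶜ = 0 →
        (mc l ν + mc l (ν.map Prod.swap)) / 2 = 0 := fun ν _ h => by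
      have h' : (ν.map Prod.swap) {p : J × J | p.1 = p.2}ᶜ = 0 := by
        rw [Measure.map_apply measurable_swap hd.compl, ← h]
        congr 1
        ext p
        simp [eq_comm]
      rw [mc_diag hl ν h, mc_diag hl _ h']
      simp
    rw [hD, key _ inferInstance hμ.1, key _ inferInstance hμ.2, sub_zero]
  · have e : μ.map Prod.swap = (μ.toJordanDecomposition.posPart.map Prod.swap).toSignedMeasure
        - (μ.toJordanDecomposition.negPart.map Prod.swap).toSignedMeasure := by
      rw [← map_toSigned _ _ measurable_swap, ← map_toSigned _ _ measurable_swap]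
      ext S hS
      conv_lhs => rw [signed_eq μ]
      rw [sub_apply, VectorMeasure.map_apply _ measurable_swap hS,
        VectorMeasure.map_apply _ measurable_swap hS, VectorMeasure.map_apply _ measurable_swap hS,
        sub_apply]
    have sw : ∀ ν : Measure (J × J), (ν.map Prod.swap).map Prod.swap = ν := fun ν => by
      rw [Measure.map_map measurable_swap measurable_swap, Prod.swap_swap_eq, Measure.map_id]
    rw [e, map_sub, hD', hD', hD, sw, sw, add_comm (mc l (Measure.map _ _)),
      add_comm (mc l (Measure.map _ _))]
  · rw [hD', hD', hD']
    have t1 := mc_triangle hl κ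
    have t2 := mc_triangle hl (κ.map fun t => (t.2.2, t.2.1, t.1))
    rw [Measure.map_map (by fun_prop) (by fun_prop), Measure.map_map (by fun_prop) (by fun_prop),
      Measure.map_map (by fun_prop) (by fun_prop)] at t2
    rw [Measure.map_map (by fun_prop) (by fun_prop), Measure.map_map (by fun_prop) (by fun_prop),
      Measure.map_map (by fun_prop) (by fun_prop)]
    simp only [Function.comp_def, Prod.swap] at t2 ⊢
    linarith

lemma signed_bdd {X : Type*} [MeasurableSpace X] (s : SignedMeasure X) :
    ∃ C : ℝ, ∀ S, MeasurableSet S → -s S ≤ C := by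
  refine ⟨s.toJordanDecomposition.negPart.real univ, fun S hS => ?_⟩
  rw [SignedMeasure.apply_eq_posPart_real_sub_negPart_real s hS]
  have a : s.toJordanDecomposition.negPart.real S ≤ s.toJordanDecomposition.negPart.real univ :=
    measureReal_mono (subset_univ _)
  have b : 0 ≤ s.toJordanDecomposition.posPart.real S := measureReal_nonneg
  linarith

/-- The separation (Hahn-Banach / Riesz extension) step. -/
lemma exists_cost (σ ψ : Measure (J × J)) [IsFiniteMeasure σ] [IsFiniteMeasure ψ] (ε : ℝ)
    (hno : ∀ φ, Flw φ → IsFiniteMeasure (σ.bind φ) →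
      ∃ S, MeasurableSet S ∧ ε ≤ (σ.bind φ).real S - ψ.real S) :
    ∃ l : Measure (J × J) → ℝ, Cost l ∧
      ∀ φ, Flw φ → IsFiniteMeasure (σ.bind φ) → l ψ + ε ≤ l (σ.bind φ) := by
  classical
  let K : PointedCone ℝ (SignedMeasure (J × J) × ℝ) :=
    { carrier := {x | ∃ (c : ℝ) (φ : _), 0 ≤ c ∧ Flw φ ∧ IsFiniteMeasure (σ.bind φ) ∧
        ∀ S, MeasurableSet S → c * ((σ.bind φ).real S - ψ.real S) ≤ x.1 S + x.2 + c * ε}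
      add_mem' := by
        rintro x y ⟨c, φ, hc, h1, h2, h3⟩ ⟨d, χ, hd, k1, k2, k3⟩
        rcases (add_nonneg hc hd).eq_or_lt with h0 | h0
        · have c0 : c = 0 := by linarith
          have d0 : d = 0 := by linarith
          refine ⟨0, φ, le_rfl, h1, h2, fun S hS => ?_⟩
          have a := h3 S hS
          have b := k3 S hS
          simp only [c0, d0, zero_mul, add_zero, Prod.fst_add, Prod.snd_add, add_apply] at a b ⊢
          linarith
        · set u : ℝ≥0 := (c / (c + d)).toNNReal with hu
          set v : ℝ≥0 := (d / (c + d)).toNNReal with hv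
          have hu' : (u : ℝ) = c / (c + d) := Real.coe_toNNReal _ (by positivity)
          have hv' : (v : ℝ) = d / (c + d) := Real.coe_toNNReal _ (by positivity)
          have huv : u + v = 1 := by
            apply NNReal.coe_injective
            push_cast
            rw [hu', hv']
            field_simp
          have hF := h1.combo k1 (f := fun _ => (u : ℝ≥0∞)) (g := fun _ => (v : ℝ≥0∞))
            measurable_const measurable_const (fun _ => by exact_mod_cast huv)
          have hb : σ.bind (fun p => (u : ℝ≥0∞) • φ p + (v : ℝ≥0∞) • χ p)
              = u • σ.bind φ + v • σ.bind χ := by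
            ext S hS
            rw [hF.load _ hS, Measure.add_apply, Measure.smul_apply, Measure.smul_apply,
              h1.load _ hS, k1.load _ hS]
            simp only [Measure.add_apply, Measure.smul_apply, smul_eq_mul, ENNReal.smul_def]
            rw [lintegral_add_left ((h1.ev hS).const_mul _), lintegral_const_mul _ (h1.ev hS),
              lintegral_const_mul _ (k1.ev hS)]
          refine ⟨c + d, _, h0.le, hF, by rw [hb]; infer_instance, fun S hS => ?_⟩
          have a := h3 S hS
          have b := k3 S hS
          rw [hb, measureReal_add_apply, measureReal_nnreal_smul_apply,
            measureReal_nnreal_smul_apply, hu', hv']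
          simp only [Prod.fst_add, Prod.snd_add, add_apply]
          have e : (c + d) * (c / (c + d) * (σ.bind φ).real S + d / (c + d) * (σ.bind χ).real S
              - ψ.real S) = c * ((σ.bind φ).real S - ψ.real S)
              + d * ((σ.bind χ).real S - ψ.real S) := by
            field_simp
            ring
          rw [e]
          linarith
      zero_mem' := ⟨0, _, le_rfl, flw_dirac, by rw [bind_dirac_self]; infer_instance,
        fun S hS => by simp⟩
      smul_mem' := by
        rintro ⟨r, hr⟩ x ⟨c, φ, hc, h1, h2, h3⟩
        refine ⟨r * c, φ, mul_nonneg hr hc, h1, h2, fun S hS => ?_⟩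
        have := mul_le_mul_of_nonneg_left (h3 S hS) hr
        change r * c * _ ≤ r * x.1 S + r * x.2 + r * c * ε
        linarith }
  have hK : ∀ x : SignedMeasure (J × J) × ℝ, x ∈ K ↔ ∃ (c : ℝ) (φ : _), 0 ≤ c ∧ Flw φ ∧
      IsFiniteMeasure (σ.bind φ) ∧
      ∀ S, MeasurableSet S → c * ((σ.bind φ).real S - ψ.real S) ≤ x.1 S + x.2 + c * ε :=
    fun x => Iff.rfl
  have hne : ((0, 1) : SignedMeasure (J × J) × ℝ) ≠ 0 := by
    intro h
    have := congrArg Prod.snd h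
    simp at this
  let f : (SignedMeasure (J × J) × ℝ) →ₗ.[ℝ] ℝ := LinearPMap.mkSpanSingleton (0, 1) 1 hne
  have hfdom : ∀ r : ℝ, r • ((0, 1) : SignedMeasure (J × J) × ℝ) ∈ f.domain := fun r =>
    Submodule.smul_mem _ _ (Submodule.mem_span_singleton_self _)
  have hf : ∀ r : ℝ, f ⟨r • (0, 1), hfdom r⟩ = r := fun r => by
    have := LinearPMap.mkSpanSingleton'_apply (σ := RingHom.id ℝ) ((0, 1) : SignedMeasure (J × J) × ℝ) (1 : ℝ)
      (fun c hc => (smul_eq_zero.1 hc).elim (fun hc => by rw [hc, RingHom.map_zero, zero_smul])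
        fun hx' => absurd hx' hne) r (hfdom r)
    exact this.trans (by simp)
  obtain ⟨g, hg1, hg2⟩ := riesz_extension K f (by
    rintro ⟨x, hx⟩ hxK
    obtain ⟨r, rfl⟩ := Submodule.mem_span_singleton.1 hx
    rw [hf r]
    obtain ⟨c, φ, hc, h1, h2, h3⟩ := (hK _).1 hxK
    obtain ⟨S, hS, hS'⟩ := hno φ h1 h2
    have a := h3 S hS
    have b := mul_le_mul_of_nonneg_left hS' hc
    simp at a
    linarith) (by
    rintro ⟨s, r⟩
    obtain ⟨C, hC⟩ := signed_bdd s
    refine ⟨⟨(C - r) • (0, 1), hfdom _⟩, (hK _).2 ⟨0, _, le_rfl, flw_dirac,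
      by rw [bind_dirac_self]; infer_instance, fun S hS => ?_⟩⟩
    have := hC S hS
    simp
    linarith)
  have hg3 : ∀ s r, g (s, r) = g (s, 0) + r := fun s r => by
    have e : ((s, r) : SignedMeasure (J × J) × ℝ) = (s, 0) + r • (0, 1) := by simp
    rw [e, map_add, hg1 ⟨_, hfdom r⟩, hf]
  let L : SignedMeasure (J × J) →ₗ[ℝ] ℝ := -(g.comp (LinearMap.inl ℝ _ ℝ))
  have hL : ∀ s r, (s, r) ∈ K → -r ≤ -L s := fun s r h => by
    have := hg2 _ h
    rw [hg3] at this
    simp only [L, LinearMap.neg_apply, LinearMap.comp_apply, LinearMap.inl_apply]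
    linarith
  have hL0 : ∀ (s : SignedMeasure (J × J)) (r : ℝ), (∀ S, MeasurableSet S → 0 ≤ s S + r) →
      L s ≤ r := fun s r h => by
    have := hL s r ((hK _).2 ⟨0, _, le_rfl, flw_dirac,
      by rw [bind_dirac_self]; infer_instance, fun S hS => by simpa using h S hS⟩)
    linarith
  let sg : Measure (J × J) → SignedMeasure (J × J) := fun μ =>
    if h : IsFiniteMeasure μ then μ.toSignedMeasure else 0
  have hsg : ∀ (μ : Measure (J × J)) [IsFiniteMeasure μ], sg μ = μ.toSignedMeasure := fun μ h => by
    simp only [sg, dif_pos]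
  refine ⟨fun μ => -L (sg μ), ⟨?_, ?_, ?_, ?_⟩, ?_⟩
  · intro μ ν _ _
    rw [hsg, hsg, hsg, Measure.toSignedMeasure_add, map_add]
    ring
  · intro c μ _
    rw [hsg, hsg, Measure.toSignedMeasure_smul]
    have : c • μ.toSignedMeasure = (c : ℝ) • μ.toSignedMeasure := rfl
    rw [this, map_smul, smul_eq_mul]
    ring
  · intro μ _
    rw [hsg]
    have := hL0 μ.toSignedMeasure 0 (fun S hS => by
      rw [Measure.toSignedMeasure_apply_measurable hS, add_zero]; exact measureReal_nonneg)
    linarith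
  · intro μ _
    rw [hsg]
    have := hL0 (-μ.toSignedMeasure) (μ.real univ) (fun S hS => by
      rw [neg_apply, Measure.toSignedMeasure_apply_measurable hS]
      have : μ.real S ≤ μ.real univ := measureReal_mono (subset_univ _)
      linarith)
    rw [map_neg] at this
    linarith
  · intro φ h1 h2
    simp only
    rw [hsg, hsg]
    have := hL ((σ.bind φ).toSignedMeasure - ψ.toSignedMeasure) (-ε)
      ((hK _).2 ⟨1, φ, zero_le_one, h1, h2, fun S hS => by
        simp only
        rw [sub_apply, Measure.toSignedMeasure_apply_measurable hS,
          Measure.toSignedMeasure_apply_measurable hS]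
        linarith⟩)
    rw [map_sub] at this
    linarith

lemma metrical_nonneg {D : SignedMeasure (J × J) →ₗ[ℝ] ℝ} [StandardBorelSpace J]
    (hD : IsMetrical D) (μ : Measure (J × J)) [IsFiniteMeasure μ] : 0 ≤ D μ.toSignedMeasure := by
  obtain ⟨-, h0, hs, ht⟩ := hD
  have hd : MeasurableSet {p : J × J | p.1 = p.2} := measurableSet_eq_fun measurable_fst measurable_snd
  have h := ht (μ.map fun p => (p.1, p.2, p.1))
  have e1 : ((μ.map fun p => (p.1, p.2, p.1)).map fun t => (t.1, t.2.1)) = μ := by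
    rw [Measure.map_map (by fun_prop) (by fun_prop)]
    exact Measure.map_id
  have e2 : ((μ.map fun p => (p.1, p.2, p.1)).map fun t => t.2) = μ.map Prod.swap := by
    rw [Measure.map_map (by fun_prop) (by fun_prop)]
    rfl
  have e3 := h0 ((μ.map fun p => (p.1, p.2, p.1)).map fun t => (t.1, t.2.2)).toSignedMeasure (by
    rw [tv_toSigned, Measure.map_map (by fun_prop) (by fun_prop),
      Measure.map_apply (by fun_prop) hd.compl]
    simp [Function.comp_def])
  rw [e3, Measure.toSignedMeasure_congr e1, Measure.toSignedMeasure_congr e2,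
    ← map_toSigned _ _ measurable_swap, hs] at h
  linarith

/-- A metrical functional does not decrease when a demand is replaced by the load of a flow. -/
lemma metrical_load [StandardBorelSpace J] {D : SignedMeasure (J × J) →ₗ[ℝ] ℝ} (hD : IsMetrical D)
    (σ : Measure (J × J)) [IsFiniteMeasure σ] {φ} (hφ : Flw φ) [hf : IsFiniteMeasure (σ.bind φ)] :
    D σ.toSignedMeasure ≤ D (σ.bind φ).toSignedMeasure := by
  have hd : MeasurableSet {p : J × J | p.1 = p.2} := measurableSet_eq_fun measurable_fst measurable_snd
  set Θ : J × J → Measure (J × J × J) := fun p => (φ p).map (fun e => (p.1, e)) with hΘ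
  have hfin : ∀ p, IsFiniteMeasure (φ p) := fun p => ⟨(hφ.fin p).lt_top⟩
  have hΘS : ∀ p S, MeasurableSet S → Θ p S = φ p ((fun e => (p.1, e)) ⁻¹' S) := fun p S hS =>
    Measure.map_apply measurable_prodMk_left hS
  have hΘf : ∀ p, IsFiniteMeasure (Θ p) := fun p => by rw [hΘ]; infer_instance
  have hΘm : Measurable Θ := by
    refine Measurable.measure_of_isPiSystem generateFrom_prod.symm isPiSystem_prod ?_ ?_
    · rintro _ ⟨A, hA, B, hB, rfl⟩
      have : (fun p : J × J => Θ p (A ×ˢ B)) =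
          (Prod.fst ⁻¹' A).indicator (fun p => φ p B) := by
        funext p
        rw [hΘS _ _ (MeasurableSet.prod hA hB)]
        by_cases hp : p.1 ∈ A
        · rw [indicator_of_mem (by exact hp)]
          congr 1
          ext e
          simp [hp]
        · rw [indicator_of_notMem (by exact hp)]
          have : (fun e : J × J => (p.1, e)) ⁻¹' (A ×ˢ B) = ∅ := by
            ext e
            simp [hp]
          rw [this, measure_empty]
      rw [this]
      exact (hφ.ev hB).indicator (measurable_fst hA)
    · simp only [hΘS _ _ MeasurableSet.univ, preimage_univ]
      exact hφ.ev MeasurableSet.univ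
  set Φ : Measure (J × J × J) := σ.bind Θ with hΦ
  have hΦS : ∀ S, MeasurableSet S → Φ S = ∫⁻ p, φ p ((fun e => (p.1, e)) ⁻¹' S) ∂σ :=
    fun S hS => by
      rw [hΦ, Measure.bind_apply hS hΘm.aemeasurable]
      exact lintegral_congr fun p => hΘS p S hS
  have hload : (Φ.map fun t => t.2) = σ.bind φ := by
    ext S hS
    rw [Measure.map_apply measurable_snd hS, hΦS _ (measurable_snd hS), hφ.load _ hS]
    rfl
  have hΦf : IsFiniteMeasure Φ := ⟨by
    have h := hf.measure_univ_lt_top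
    rwa [← hload, Measure.map_apply measurable_snd MeasurableSet.univ] at h⟩
  have hbal : (Φ.map fun t => (t.1, t.2.1)) + σ =
      (Φ.map fun t => (t.1, t.2.2)) + σ.map (fun p => (p.1, p.1)) := by
    ext S hS
    have m1 : Measurable fun t : J × J × J => (t.1, t.2.1) := by fun_prop
    have m2 : Measurable fun t : J × J × J => (t.1, t.2.2) := by fun_prop
    have m3 : Measurable fun p : J × J => (p.1, p.1) := by fun_prop
    rw [Measure.add_apply, Measure.add_apply, Measure.map_apply m1 hS, Measure.map_apply m2 hS,
      Measure.map_apply m3 hS, hΦS _ (m1 hS), hΦS _ (m2 hS), ← lintegral_indicator_one hS,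
      ← lintegral_indicator_one (m3 hS),
      ← lintegral_add_right _ (measurable_one.indicator hS),
      ← lintegral_add_right _ (measurable_one.indicator (m3 hS))]
    refine lintegral_congr fun p => ?_
    have hU : MeasurableSet ((fun x : J => (p.1, x)) ⁻¹' S) := measurable_prodMk_left hS
    have h := hφ.cons p _ hU
    rw [Measure.dirac_apply' _ hU, Measure.dirac_apply' _ hU] at h
    exact h
  obtain ⟨-, h0, hs, ht⟩ := hD
  have h1 := ht Φ
  rw [Measure.toSignedMeasure_congr hload] at h1
  have h2 := congrArg D (Measure.toSignedMeasure_congr hbal)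
  rw [Measure.toSignedMeasure_add, Measure.toSignedMeasure_add, map_add, map_add,
    h0 (σ.map (fun p => (p.1, p.1))).toSignedMeasure (by
      rw [tv_toSigned, Measure.map_apply (by fun_prop) hd.compl]
      simp)] at h2
  linarith

lemma metrical_le [StandardBorelSpace J] {D : SignedMeasure (J × J) →ₗ[ℝ] ℝ} (hD : IsMetrical D)
    {C : ℝ} (hC : ∀ μ : SignedMeasure (J × J), |D μ| ≤ C * (μ.totalVariation univ).toReal)
    (hC0 : 0 ≤ C) (μ ψ : Measure (J × J)) [IsFiniteMeasure μ] [IsFiniteMeasure ψ] {ε : ℝ}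
    (h : ∀ S, MeasurableSet S → μ.real S - ψ.real S ≤ ε) :
    D μ.toSignedMeasure ≤ D ψ.toSignedMeasure + C * ε := by
  set s := μ.toSignedMeasure - ψ.toSignedMeasure with hs
  set a := s.toJordanDecomposition.posPart with ha
  set b := s.toJordanDecomposition.negPart with hb
  obtain ⟨i, hi, h1, h2⟩ := s.toJordanDecomposition.mutuallySingular
  have e : s iᶜ = a.real univ := by
    rw [SignedMeasure.apply_eq_posPart_real_sub_negPart_real s hi.compl]
    have q1 : b.real iᶜ = 0 := by rw [measureReal_def, h2]; rfl
    have q2 : a.real i = 0 := by rw [measureReal_def, h1]; rfl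
    have q3 := measureReal_add_measureReal_compl (μ := a) hi
    rw [← ha, ← hb]
    linarith
  have e2 : a.real univ ≤ ε := by
    rw [← e, hs, Measure.toSignedMeasure_sub_apply hi.compl]
    exact h _ hi.compl
  have e3 : D s = D a.toSignedMeasure - D b.toSignedMeasure := by
    conv_lhs => rw [signed_eq s]
    rw [map_sub]
  have e4 := hC a.toSignedMeasure
  rw [tv_toSigned] at e4
  have e5 := metrical_nonneg hD b
  have e6 := le_abs_self (D a.toSignedMeasure)
  have e7 : C * (a univ).toReal ≤ C * ε := mul_le_mul_of_nonneg_left e2 hC0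
  have e8 : D s = D μ.toSignedMeasure - D ψ.toSignedMeasure := map_sub D _ _
  linarith

end MCF

open MCF in
/-- **Multicommodity Flow Theorem for measures.** Let `σ` (demands) and `ψ` (capacities) be
symmetric finite nonnegative Borel measures on `J × J`. There is a multicommodity flow for `σ`
with arbitrarily small overload over `ψ` iff `D(σ) ≤ D(ψ)` for every metrical bounded linear
functional `D`. A multicommodity flow is a measurable family `(φ_{st})` of finite measures,
each an `s`-`t` flow of value `1`; its overload over `ψ` is the total mass of the positive
part of (total load − ψ), i.e. `sup_S (∫ φ_{st}(S) dσ(s,t) − ψ(S))`. -/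
theorem stmt_13 {J : Type*} [MeasurableSpace J] [StandardBorelSpace J]
    (σ ψ : Measure (J × J)) [IsFiniteMeasure σ] [IsFiniteMeasure ψ]
    (hσ : σ.map Prod.swap = σ) (hψ : ψ.map Prod.swap = ψ) :
    (∀ ε : ℝ, 0 < ε →
      ∃ φ : J × J → Measure (J × J),
        (∀ p, IsFiniteMeasure (φ p)) ∧
        (∀ U : Set (J × J), MeasurableSet U → Measurable fun p => φ p U) ∧
        (∀ p : J × J, (φ p).fst + Measure.dirac p.2 = (φ p).snd + Measure.dirac p.1) ∧
        (⨆ (S : Set (J × J)) (_ : MeasurableSet S),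
          ((∫⁻ p, φ p S ∂σ) - ψ S)) < ENNReal.ofReal ε) ↔
      (∀ D : SignedMeasure (J × J) →ₗ[ℝ] ℝ, IsMetrical D →
        D σ.toSignedMeasure ≤ D ψ.toSignedMeasure) := by
  constructor
  · intro H D hD
    obtain ⟨C, hC⟩ := hD.1
    have hC' : ∀ μ : SignedMeasure (J × J), |D μ| ≤ max C 0 * (μ.totalVariation univ).toReal :=
      fun μ => (hC μ).trans (mul_le_mul_of_nonneg_right (le_max_left _ _) ENNReal.toReal_nonneg)
    set C' := max C 0
    have hC0 : 0 ≤ C' := le_max_right _ _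
    refine le_of_forall_pos_le_add fun δ hδ => ?_
    have hpos : 0 < δ / (C' + 1) := by positivity
    obtain ⟨φ, f1, f2, f3, f4⟩ := H _ hpos
    have hφ : Flw φ :=
      { meas := Measure.measurable_of_measurable_coe _ f2
        fin := fun p => have := f1 p; measure_ne_top _ _
        cons := fun p U hU => by
          have := congrArg (fun m : Measure J => m U) (f3 p)
          simpa only [Measure.add_apply, Measure.fst_apply hU, Measure.snd_apply hU] using this }
    have hS : ∀ S, MeasurableSet S →
        σ.bind φ S ≤ ψ S + ENNReal.ofReal (δ / (C' + 1)) := fun S hS => by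
      have h1 : (∫⁻ p, φ p S ∂σ) - ψ S ≤ ENNReal.ofReal (δ / (C' + 1)) :=
        (le_iSup₂ (f := fun (S : Set (J × J)) (_ : MeasurableSet S) =>
          (∫⁻ p, φ p S ∂σ) - ψ S) S hS).trans f4.le
      rw [hφ.load _ hS]
      rw [add_comm]
      exact tsub_le_iff_right.1 h1
    have hfin : IsFiniteMeasure (σ.bind φ) := ⟨(hS univ MeasurableSet.univ).trans_lt
      (ENNReal.add_lt_top.2 ⟨measure_lt_top _ _, ENNReal.ofReal_lt_top⟩)⟩
    have h2 := metrical_load hD σ hφ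
    have h3 := metrical_le hD hC' hC0 (σ.bind φ) ψ (ε := δ / (C' + 1)) (fun S hSm => by
      have h4 := ENNReal.toReal_mono (ENNReal.add_ne_top.2
        ⟨measure_ne_top _ _, ENNReal.ofReal_ne_top⟩) (hS S hSm)
      rw [ENNReal.toReal_add (measure_ne_top _ _) ENNReal.ofReal_ne_top,
        ENNReal.toReal_ofReal hpos.le] at h4
      simp only [measureReal_def]
      linarith)
    have h5 : C' * (δ / (C' + 1)) ≤ δ := by
      rw [mul_div_assoc', div_le_iff₀ (by positivity)]; nlinarith
    linarith
  · intro H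
    by_contra hcon
    push Not at hcon
    obtain ⟨ε, hε, hno⟩ := hcon
    obtain ⟨l, hl, hl2⟩ := exists_cost σ ψ (ε / 2) (fun φ hφ hfin => by
      have h1 := hno φ (fun p => ⟨(hφ.fin p).lt_top⟩) (fun U hU => hφ.ev hU) (fun p => by
        ext U hU
        simpa only [Measure.add_apply, Measure.fst_apply hU, Measure.snd_apply hU]
          using hφ.cons p U hU)
      have h2 : ENNReal.ofReal (ε / 2) < ENNReal.ofReal ε :=
        (ENNReal.ofReal_lt_ofReal_iff hε).2 (by linarith)
      obtain ⟨S, hS⟩ := lt_iSup_iff.1 (h2.trans_le h1)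
      obtain ⟨hSm, hS⟩ := lt_iSup_iff.1 hS
      refine ⟨S, hSm, ?_⟩
      rw [← hφ.load _ hSm] at hS
      have h3 := lt_tsub_iff_right.1 hS
      have h4 := ENNReal.toReal_mono (measure_ne_top _ _) h3.le
      rw [ENNReal.toReal_add ENNReal.ofReal_ne_top (measure_ne_top _ _),
        ENNReal.toReal_ofReal (by linarith)] at h4
      simp only [measureReal_def]
      linarith)
    obtain ⟨D, hD, hD'⟩ := metrical_of_cost hl
    have h := H D hD
    rw [hD', hD', hσ, hψ] at h
    have h1 := mc_le_self hl ψ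
    have h2 : l ψ + ε / 2 ≤ mc l σ := le_mc hl2
    linarith
end

section
/- Let (J, 𝒜) be a standard Borel space and let λ₁, λ₂ be Borel probability measures on J. Let μ_n (n = 1, 2, …) be Borel measures on J × J coupling λ₁ and λ₂, i.e. with marginals μ_n¹ = λ₁ and μ_n² = λ₂. Then there is a strictly increasing sequence of indices n₁ < n₂ < ⋯ and a measure μ on J × J coupling λ₁ and λ₂ such that μ_{n_i}(A × B) → μ(A × B) as i → ∞, for all Borel sets A, B ⊆ J. -/
open MeasureTheory Set

lemma coupling_rect_le {J : Type*} [MeasurableSpace J] {l₁ l₂ : Measure J}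
    {ρ : Measure (J × J)} (h1 : ρ.fst = l₁) (h2 : ρ.snd = l₂) {A A' B B' : Set J}
    (hA : MeasurableSet A) (hA' : MeasurableSet A')
    (hB : MeasurableSet B) (hB' : MeasurableSet B') :
    ρ (A' ×ˢ B') ≤ ρ (A ×ˢ B) + (l₁ (A' \ A) + l₂ (B' \ B)) := by
  subst h1 h2
  rw [Measure.fst_apply (hA'.diff hA), Measure.snd_apply (hB'.diff hB)]
  refine le_trans (measure_mono ?_) ((measure_union_le _ _).trans
    (add_le_add le_rfl (measure_union_le _ _)))
  rintro ⟨x, y⟩ ⟨hx, hy⟩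
  by_cases h : x ∈ A <;> by_cases h' : y ∈ B <;> simp_all

/-- **Compactness of couplings.** Let `λ₁, λ₂` be Borel probability measures on a standard
Borel space `J`, and let `μ_n` be measures on `J × J` coupling `λ₁` and `λ₂`. Then there is a
subsequence `n₁ < n₂ < ⋯` and a coupling `μ` of `λ₁` and `λ₂` such that
`μ_{n_i}(A × B) → μ(A × B)` for all Borel sets `A, B`. -/
theorem stmt_15 {J : Type*} [MeasurableSpace J] [StandardBorelSpace J]
    (lam₁ lam₂ : Measure J) [IsProbabilityMeasure lam₁] [IsProbabilityMeasure lam₂]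
    (μ : ℕ → Measure (J × J))
    (h1 : ∀ n, (μ n).fst = lam₁) (h2 : ∀ n, (μ n).snd = lam₂) :
    ∃ (φ : ℕ → ℕ) (ν : Measure (J × J)), StrictMono φ ∧ ν.fst = lam₁ ∧ ν.snd = lam₂ ∧
      ∀ A B : Set J, MeasurableSet A → MeasurableSet B →
        Filter.Tendsto (fun i => μ (φ i) (A ×ˢ B)) Filter.atTop (nhds (ν (A ×ˢ B))) := by
  let := upgradeStandardBorel J
  have hp : ∀ n, IsProbabilityMeasure (μ n) := fun n => ⟨by
    rw [← Measure.fst_univ, h1 n]; exact measure_univ⟩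
  let P : ℕ → ProbabilityMeasure (J × J) := fun n => ⟨μ n, hp n⟩
  have htight : IsTightMeasureSet
      {((m : ProbabilityMeasure (J × J)) : Measure (J × J)) | m ∈ range P} := by
    apply IsTightMeasureSet.prodMk
    · refine (isTightMeasureSet_singleton (μ := lam₁)).subset ?_
      rintro _ ⟨_, ⟨_, ⟨n, rfl⟩, rfl⟩, rfl⟩
      exact h1 n
    · refine (isTightMeasureSet_singleton (μ := lam₂)).subset ?_
      rintro _ ⟨_, ⟨_, ⟨n, rfl⟩, rfl⟩, rfl⟩
      exact h2 n
  obtain ⟨ν, -, φ, hφ, hlim⟩ :=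
    (isCompact_closure_of_isTightMeasureSet htight).tendsto_subseq
      (fun n => subset_closure (mem_range_self n) : ∀ n, P n ∈ closure (range P))
  have hν1 : (ν : Measure (J × J)).fst = lam₁ := by
    have hc := ((ProbabilityMeasure.continuous_map (Ω := J × J) continuous_fst).tendsto ν).comp hlim
    have he : ∀ n, (P n).map (measurable_fst.aemeasurable) =
        (⟨lam₁, inferInstance⟩ : ProbabilityMeasure J) := fun n => Subtype.ext (h1 n)
    have := tendsto_nhds_unique hc
      (tendsto_const_nhds.congr (fun n => (he (φ n)).symm))
    exact congrArg Subtype.val this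
  have hν2 : (ν : Measure (J × J)).snd = lam₂ := by
    have hc := ((ProbabilityMeasure.continuous_map (Ω := J × J) continuous_snd).tendsto ν).comp hlim
    have he : ∀ n, (P n).map (measurable_snd.aemeasurable) =
        (⟨lam₂, inferInstance⟩ : ProbabilityMeasure J) := fun n => Subtype.ext (h2 n)
    have := tendsto_nhds_unique hc
      (tendsto_const_nhds.congr (fun n => (he (φ n)).symm))
    exact congrArg Subtype.val this
  refine ⟨φ, ν, hφ, hν1, hν2, fun A B hA hB => ?_⟩
  refine tendsto_of_le_liminf_of_limsup_le ?_ ?_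
  · refine ENNReal.le_of_forall_pos_le_add fun ε hε _ => ?_
    have hε' : (ε / 2 : ENNReal) ≠ 0 := by simp [hε.ne']
    obtain ⟨U, hAU, hU, -, hUA⟩ := hA.exists_isOpen_sdiff_lt (measure_ne_top lam₁ A) hε'
    obtain ⟨V, hBV, hV, -, hVB⟩ := hB.exists_isOpen_sdiff_lt (measure_ne_top lam₂ B) hε'
    calc (ν : Measure (J × J)) (A ×ˢ B) ≤ (ν : Measure (J × J)) (U ×ˢ V) :=
          measure_mono (prod_mono hAU hBV)
      _ ≤ Filter.liminf (fun i => μ (φ i) (U ×ˢ V)) Filter.atTop :=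
          ProbabilityMeasure.le_liminf_measure_open_of_tendsto hlim (hU.prod hV)
      _ ≤ Filter.liminf (fun i => μ (φ i) (A ×ˢ B) + ε) Filter.atTop := by
          refine Filter.liminf_le_liminf (Filter.Eventually.of_forall fun i => ?_)
          refine (coupling_rect_le (h1 _) (h2 _) hA hU.measurableSet hB hV.measurableSet).trans ?_
          refine add_le_add le_rfl ((add_le_add hUA.le hVB.le).trans ?_)
          rw [ENNReal.add_halves]
      _ = Filter.liminf (fun i => μ (φ i) (A ×ˢ B)) Filter.atTop + ε := by
          apply liminf_add_const <;> isBoundedDefault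
  · refine ENNReal.le_of_forall_pos_le_add fun ε hε _ => ?_
    have hε' : (ε / 2 : ENNReal) ≠ 0 := by simp [hε.ne']
    obtain ⟨U, hAU, hU, hUA⟩ := hA.exists_isClosed_sdiff_lt (measure_ne_top lam₁ A) hε'
    obtain ⟨V, hBV, hV, hVB⟩ := hB.exists_isClosed_sdiff_lt (measure_ne_top lam₂ B) hε'
    calc Filter.limsup (fun i => μ (φ i) (A ×ˢ B)) Filter.atTop
        ≤ Filter.limsup (fun i => μ (φ i) (U ×ˢ V) + ε) Filter.atTop := by
          refine Filter.limsup_le_limsup (Filter.Eventually.of_forall fun i => ?_)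
          refine (coupling_rect_le (h1 _) (h2 _) hU.measurableSet hA hV.measurableSet hB).trans ?_
          refine add_le_add le_rfl ((add_le_add hUA.le hVB.le).trans ?_)
          rw [ENNReal.add_halves]
      _ = Filter.limsup (fun i => μ (φ i) (U ×ˢ V)) Filter.atTop + ε := by
          apply limsup_add_const <;> isBoundedDefault
      _ ≤ (ν : Measure (J × J)) (U ×ˢ V) + ε := add_le_add
          (ProbabilityMeasure.limsup_measure_closed_le_of_tendsto hlim (hU.prod hV)) le_rfl
      _ ≤ (ν : Measure (J × J)) (A ×ˢ B) + ε :=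
          add_le_add (measure_mono (prod_mono hAU hBV)) le_rfl
end
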